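/- For every N ≥ 4 and every real u with 0.841 < u < 1, the N-party ring distribution P_Q(a₁,…,a_N) is nonlocal on the network in which parties A₄,…,A_N are merged into a single party M that shares a common source with A₁ and A₃: there do not exist types Λ₁, Λ₂, Λ₃ with probability distributions μ₁, μ₂, μ₃ and response kernels p₁(a₁|λ₁,λ₃), p₂(a₂|λ₁,λ₂), p₃(a₃|λ₂,λ₃), p_M(a₄,…,a_N|λ₃) (each a_j ∈ {0, 1₀, 1₁, 2}, the merged party outputting (a₄,…,a_N) jointly) such that P_Q(a₁,…,a_N) equals the expectation over independently sampled λ₁, λ₂, λ₃ of the product p₁(a₁|λ₁,λ₃)·p₂(a₂|λ₁,λ₂)·p₃(a₃|λ₂,λ₃)·p_M(a₄,…,a_N|λ₃), for all outcomes. -/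

import Mathlib

open MeasureTheory

noncomputable def uco (u : ℝ) : Fin 2 → ℝ := ![u, Real.sqrt (1 - u ^ 2)]
noncomputable def vco (u : ℝ) : Fin 2 → ℝ := ![Real.sqrt (1 - u ^ 2), -u]

inductive Outc where
  | zero : Outc
  | one : Fin 2 → Outc
  | two : Outc
  deriving DecidableEq, Fintype

noncomputable def psiPlus : Fin 2 → Fin 2 → ℝ := fun i j =>
  if i = 0 ∧ j = 1 then (Real.sqrt 2)⁻¹ else if i = 1 ∧ j = 0 then (Real.sqrt 2)⁻¹ else 0

noncomputable def basisVec (u : ℝ) : Outc → Fin 2 → Fin 2 → ℝ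
  | Outc.zero => fun l r => if l = 0 ∧ r = 0 then 1 else 0
  | Outc.one i => fun l r => if l = 0 ∧ r = 1 then uco u i else if l = 1 ∧ r = 0 then vco u i else 0
  | Outc.two => fun l r => if l = 1 ∧ r = 1 then 1 else 0

def finNext {N : ℕ} (k : Fin N) : Fin N := ⟨(k.val + 1) % N, Nat.mod_lt _ k.pos⟩

noncomputable def ringAmp (N : ℕ) (u : ℝ) (a : Fin N → Outc) : ℝ :=
  ∑ L : Fin N → Fin 2, ∑ R : Fin N → Fin 2,
    (∏ k, basisVec u (a k) (L k) (R k)) * ∏ k, psiPlus (R k) (L (finNext k))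

noncomputable def ringP (N : ℕ) (u : ℝ) (a : Fin N → Outc) : ℝ := ringAmp N u a ^ 2

/-- Bounded measurable real-valued functions. -/
def BddMeas {α : Type*} [MeasurableSpace α] (f : α → ℝ) : Prop :=
  Measurable f ∧ ∃ C, ∀ x, |f x| ≤ C

namespace BddMeas

variable {α β : Type*} [MeasurableSpace α] [MeasurableSpace β] {f g : α → ℝ}

theorem const (c : ℝ) : BddMeas fun _ : α => c := ⟨measurable_const, |c|, fun _ => le_rfl⟩

theorem add (hf : BddMeas f) (hg : BddMeas g) : BddMeas fun x => f x + g x := by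
  obtain ⟨hf, C, hC⟩ := hf
  obtain ⟨hg, D, hD⟩ := hg
  exact ⟨hf.add hg, C + D, fun x => (abs_add_le _ _).trans (add_le_add (hC x) (hD x))⟩

theorem neg (hf : BddMeas f) : BddMeas fun x => -f x := by
  obtain ⟨hf, C, hC⟩ := hf
  exact ⟨hf.neg, C, fun x => (abs_neg _).trans_le (hC x)⟩

theorem sub (hf : BddMeas f) (hg : BddMeas g) : BddMeas fun x => f x - g x := by
  simpa only [sub_eq_add_neg] using hf.add hg.neg

theorem mul (hf : BddMeas f) (hg : BddMeas g) : BddMeas fun x => f x * g x := by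
  obtain ⟨hf, C, hC⟩ := hf
  obtain ⟨hg, D, hD⟩ := hg
  refine ⟨hf.mul hg, C * D, fun x => ?_⟩
  rw [abs_mul]
  exact mul_le_mul (hC x) (hD x) (abs_nonneg _) ((abs_nonneg _).trans (hC x))

theorem pow (hf : BddMeas f) (n : ℕ) : BddMeas fun x => f x ^ n := by
  obtain ⟨hf, C, hC⟩ := hf
  refine ⟨hf.pow_const n, C ^ n, fun x => ?_⟩
  rw [abs_pow]
  exact pow_le_pow_left₀ (abs_nonneg _) (hC x) n

theorem comp {h : β → α} (hf : BddMeas f) (hh : Measurable h) : BddMeas fun x => f (h x) := by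
  obtain ⟨hf, C, hC⟩ := hf
  exact ⟨hf.comp hh, C, fun x => hC _⟩

theorem integrable (hf : BddMeas f) (μ : Measure α) [IsFiniteMeasure μ] : Integrable f μ := by
  obtain ⟨hf, C, hC⟩ := hf
  exact Integrable.of_bound hf.aestronglyMeasurable C (ae_of_all _ hC)

end BddMeas

/-- Two bounded independent centred variables of variance `1/4` whose sum takes values in
`{-1, 0, 1}` are signs up to the factor `1/2`. -/
theorem sq_eq_quarter_of_cube_eq {Ω : Type*} [MeasurableSpace Ω] (P : Measure Ω)
    [IsProbabilityMeasure P] {F G : Ω → ℝ} (hF : BddMeas F) (hG : BddMeas G)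
    (hind : ∀ j k : ℕ, ∫ ω, F ω ^ j * G ω ^ k ∂P = (∫ ω, F ω ^ j ∂P) * ∫ ω, G ω ^ k ∂P)
    (hF1 : ∫ ω, F ω ∂P = 0) (hG1 : ∫ ω, G ω ∂P = 0)
    (hF2 : ∫ ω, F ω ^ 2 ∂P = 1 / 4) (hG2 : ∫ ω, G ω ^ 2 ∂P = 1 / 4)
    (hcube : ∀ᵐ ω ∂P, (F ω + G ω) ^ 3 = F ω + G ω) :
    ∀ᵐ ω ∂P, F ω ^ 2 = 1 / 4 := by
  have int : ∀ j k : ℕ, Integrable (fun ω => F ω ^ j * G ω ^ k) P := fun j k =>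
    ((hF.pow j).mul (hG.pow k)).integrable P
  have h0 : ∫ ω, F ω ^ 4 * G ω ^ 0 + 3 * (F ω ^ 3 * G ω ^ 1) + 3 * (F ω ^ 2 * G ω ^ 2)
      + F ω ^ 1 * G ω ^ 3 - F ω ^ 2 * G ω ^ 0 - F ω ^ 1 * G ω ^ 1 ∂P = 0 := by
    rw [integral_congr_ae (g := fun _ => (0 : ℝ)), integral_zero]
    filter_upwards [hcube] with ω h
    linear_combination F ω * h
  rw [integral_sub, integral_sub, integral_add, integral_add, integral_add,
    integral_const_mul, integral_const_mul] at h0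
  · simp only [hind] at h0
    simp only [pow_one, pow_zero, hF1, hG1, hF2, hG2, integral_const, probReal_univ,
      smul_eq_mul] at h0
    have h4 : ∫ ω, (F ω ^ 2 - 1 / 4) ^ 2 ∂P = 0 := by
      have : ∀ ω, (F ω ^ 2 - 1 / 4) ^ 2 = F ω ^ 4 - 1 / 2 * F ω ^ 2 + 1 / 16 := fun ω => by ring
      simp only [this]
      rw [integral_add, integral_sub, integral_const_mul, hF2]
      · simp
        linarith
      · exact (hF.pow 4).integrable P
      · exact ((hF.pow 2).integrable P).const_mul _
      · exact (((hF.pow 4).integrable P).sub (((hF.pow 2).integrable P).const_mul _))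
      · exact integrable_const _
    rw [integral_eq_zero_iff_of_nonneg (fun ω => sq_nonneg _)] at h4
    · filter_upwards [h4] with ω h
      have : (F ω ^ 2 - 1 / 4) ^ 2 = 0 := h
      linarith [pow_eq_zero_iff (two_ne_zero) |>.1 this]
    · exact ((((hF.pow 2).sub (.const _)).pow 2).integrable P)
  all_goals
    first
    | exact int _ _
    | exact (int _ _).const_mul _
    | fun_prop (disch := exact int _ _)

section Coordinates

variable {X Y Z : Type*} [MeasurableSpace X] [MeasurableSpace Y] [MeasurableSpace Z]
  (μ : Measure X) (ν : Measure Y) (ρ : Measure Z)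
  [IsProbabilityMeasure μ] [IsProbabilityMeasure ν] [IsProbabilityMeasure ρ]

theorem measurePreserving_swap_fst_snd :
    MeasurePreserving (fun ω : X × Y × Z => (ω.2.1, ω.1, ω.2.2))
      (μ.prod (ν.prod ρ)) (ν.prod (μ.prod ρ)) := by
  have h1 := (measurePreserving_prodAssoc μ ν ρ).symm
  have h2 : MeasurePreserving (Prod.map Prod.swap id : (X × Y) × Z → (Y × X) × Z) _ _ :=
    (Measure.measurePreserving_swap (μ := μ) (ν := ν)).prod (MeasurePreserving.id ρ)
  exact (measurePreserving_prodAssoc ν μ ρ).comp (h2.comp h1)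

theorem integral_mul_fst (f : X → ℝ) (g : Y → Z → ℝ) :
    ∫ ω, f ω.1 * g ω.2.1 ω.2.2 ∂μ.prod (ν.prod ρ) =
      (∫ ω, f ω.1 ∂μ.prod (ν.prod ρ)) * ∫ ω, g ω.2.1 ω.2.2 ∂μ.prod (ν.prod ρ) := by
  rw [integral_prod_mul (μ := μ) (ν := ν.prod ρ) f fun y => g y.1 y.2,
    integral_fun_fst, integral_fun_snd (μ := μ) (ν := ν.prod ρ) fun y => g y.1 y.2]
  simp

theorem integral_mul_snd {f : Y → ℝ} {g : X → Z → ℝ} (hf : BddMeas f)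
    (hg : BddMeas (Function.uncurry g)) :
    ∫ ω, f ω.2.1 * g ω.1 ω.2.2 ∂μ.prod (ν.prod ρ) =
      (∫ ω, f ω.2.1 ∂μ.prod (ν.prod ρ)) * ∫ ω, g ω.1 ω.2.2 ∂μ.prod (ν.prod ρ) := by
  have h := integral_mul_fst ν μ ρ f g
  have hT := measurePreserving_swap_fst_snd μ ν ρ
  have hf' : BddMeas fun ω : Y × X × Z => f ω.1 := hf.comp measurable_fst
  have hg' : BddMeas fun ω : Y × X × Z => g ω.2.1 ω.2.2 := hg.comp measurable_snd
  have key : ∀ φ : Y × X × Z → ℝ, BddMeas φ → ∫ ω, φ ω ∂ν.prod (μ.prod ρ) =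
      ∫ ω, φ (ω.2.1, ω.1, ω.2.2) ∂μ.prod (ν.prod ρ) := fun φ hφ => by
    rw [← hT.map_eq, integral_map hT.measurable.aemeasurable hφ.1.aestronglyMeasurable]
  rw [key _ (hf'.mul hg'), key _ hf', key _ hg'] at h
  exact h

theorem integral_mul_thd {f : Z → ℝ} {g : X → Y → ℝ} (hf : BddMeas f)
    (hg : BddMeas (Function.uncurry g)) :
    ∫ ω, f ω.2.2 * g ω.1 ω.2.1 ∂μ.prod (ν.prod ρ) =
      (∫ ω, f ω.2.2 ∂μ.prod (ν.prod ρ)) * ∫ ω, g ω.1 ω.2.1 ∂μ.prod (ν.prod ρ) := by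
  have hT := measurePreserving_prodAssoc μ ν ρ
  have hf' : BddMeas fun ω : X × Y × Z => f ω.2.2 := hf.comp (by fun_prop)
  have hg' : BddMeas fun ω : X × Y × Z => g ω.1 ω.2.1 :=
    hg.comp (h := fun ω : X × Y × Z => (ω.1, ω.2.1)) (by fun_prop)
  have key : ∀ φ : X × Y × Z → ℝ, ∫ ω, φ ω ∂μ.prod (ν.prod ρ) =
      ∫ ω, φ (ω.1.1, ω.1.2, ω.2) ∂(μ.prod ν).prod ρ := fun φ => by
    rw [← hT.map_eq, integral_map_equiv]
    rfl
  rw [key, key, key]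
  have h := integral_prod_mul (μ := μ.prod ν) (ν := ρ) (fun x => g x.1 x.2) f
  have h1 := integral_fun_fst (μ := μ.prod ν) (ν := ρ) (fun x => g x.1 x.2)
  have h2 := integral_fun_snd (μ := μ.prod ν) (ν := ρ) f
  simp only [probReal_univ, one_smul] at h1 h2
  rw [h1, h2, mul_comm, ← h]
  simp only [mul_comm]

end Coordinates

section Core

variable {X Y Z : Type*} [MeasurableSpace X] [MeasurableSpace Y] [MeasurableSpace Z]
  (μ : Measure X) (ν : Measure Y) (ρ : Measure Z)
  [IsProbabilityMeasure μ] [IsProbabilityMeasure ν] [IsProbabilityMeasure ρ]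

/-- If `α (x, z) + β (x, y) + γ (y, z) = 0` almost surely, then each summand splits additively
into functions of one variable. -/
theorem exists_additive_splitting {α : X → Z → ℝ} {β : X → Y → ℝ} {γ : Y → Z → ℝ}
    (hα : BddMeas (Function.uncurry α)) (hβ : BddMeas (Function.uncurry β))
    (h : ∀ᵐ ω ∂μ.prod (ν.prod ρ), α ω.1 ω.2.2 + β ω.1 ω.2.1 + γ ω.2.1 ω.2.2 = 0) :
    ∃ (F : X → ℝ) (G : Y → ℝ) (H : Z → ℝ), BddMeas F ∧ BddMeas G ∧ BddMeas H ∧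
      ∫ ω, F ω.1 ∂μ.prod (ν.prod ρ) = 0 ∧
      ∀ᵐ ω ∂μ.prod (ν.prod ρ), α ω.1 ω.2.2 = H ω.2.2 - F ω.1 ∧
        β ω.1 ω.2.1 = F ω.1 + G ω.2.1 ∧ γ ω.2.1 ω.2.2 = -G ω.2.1 - H ω.2.2 := by
  obtain ⟨x₀, hx₀⟩ := (Measure.ae_ae_of_ae_prod h).exists
  have hG : BddMeas (β x₀) := hβ.comp (h := fun y => (x₀, y)) (by fun_prop)
  have hH : BddMeas (α x₀) := hα.comp (h := fun z => (x₀, z)) (by fun_prop)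
  have hx₀' : ∀ᵐ ω ∂μ.prod (ν.prod ρ), α x₀ ω.2.2 + β x₀ ω.2.1 + γ ω.2.1 ω.2.2 = 0 :=
    Measure.quasiMeasurePreserving_snd.ae hx₀
  have h' : ∀ᵐ ω ∂μ.prod (ν.prod ρ),
      β ω.1 ω.2.1 - β x₀ ω.2.1 = α x₀ ω.2.2 - α ω.1 ω.2.2 := by
    filter_upwards [h, hx₀'] with ω h1 h2
    linear_combination h1 - h2
  have h'' := (measurePreserving_swap_fst_snd ν μ ρ).quasiMeasurePreserving.ae h'
  obtain ⟨y₀, hy₀⟩ := (Measure.ae_ae_of_ae_prod h'').exists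
  have hF : BddMeas fun x => β x y₀ - β x₀ y₀ :=
    (hβ.comp (h := fun x => (x, y₀)) (by fun_prop)).sub (.const _)
  have hy₀' : ∀ᵐ ω ∂μ.prod (ν.prod ρ),
      β ω.1 y₀ - β x₀ y₀ = α x₀ ω.2.2 - α ω.1 ω.2.2 :=
    (Measure.quasiMeasurePreserving_snd.comp
      (measurePreserving_swap_fst_snd μ ν ρ).quasiMeasurePreserving).ae hy₀
  set c := ∫ ω, (β ω.1 y₀ - β x₀ y₀) ∂μ.prod (ν.prod ρ) with hc
  refine ⟨fun x => β x y₀ - β x₀ y₀ - c, fun y => β x₀ y + c, fun z => α x₀ z - c,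
    hF.sub (.const _), hG.add (.const _), hH.sub (.const _), ?_, ?_⟩
  · rw [integral_sub ((hF.comp measurable_fst).integrable _) (integrable_const _), ← hc]
    simp
  · filter_upwards [h, hx₀', hy₀'] with ω h1 h2 h3
    refine ⟨?_, ?_, ?_⟩
    · linear_combination h3
    · linear_combination h1 - h2 - h3
    · linear_combination h2

/-- Signs with values in `{-1/2, 1/2}` governing the two sources adjacent to the middle party. -/
theorem exists_token_functions {α : X → Z → ℝ} {β : X → Y → ℝ} {γ : Y → Z → ℝ}
    (hα : BddMeas (Function.uncurry α)) (hβ : BddMeas (Function.uncurry β))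
    (h : ∀ᵐ ω ∂μ.prod (ν.prod ρ), α ω.1 ω.2.2 + β ω.1 ω.2.1 + γ ω.2.1 ω.2.2 = 0)
    (hα3 : ∀ᵐ ω ∂μ.prod (ν.prod ρ), α ω.1 ω.2.2 ^ 3 = α ω.1 ω.2.2)
    (hβ3 : ∀ᵐ ω ∂μ.prod (ν.prod ρ), β ω.1 ω.2.1 ^ 3 = β ω.1 ω.2.1)
    (hα1 : ∫ ω, α ω.1 ω.2.2 ∂μ.prod (ν.prod ρ) = 0)
    (hβ1 : ∫ ω, β ω.1 ω.2.1 ∂μ.prod (ν.prod ρ) = 0)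
    (hα2 : ∫ ω, α ω.1 ω.2.2 ^ 2 ∂μ.prod (ν.prod ρ) = 1 / 2)
    (hβ2 : ∫ ω, β ω.1 ω.2.1 ^ 2 ∂μ.prod (ν.prod ρ) = 1 / 2)
    (hαβ : ∫ ω, α ω.1 ω.2.2 * β ω.1 ω.2.1 ∂μ.prod (ν.prod ρ) = -(1 / 4)) :
    ∃ (F : X → ℝ) (G : Y → ℝ) (H : Z → ℝ), BddMeas F ∧ BddMeas G ∧ BddMeas H ∧
      ∫ ω, F ω.1 ∂μ.prod (ν.prod ρ) = 0 ∧ ∫ ω, G ω.2.1 ∂μ.prod (ν.prod ρ) = 0 ∧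
      ∀ᵐ ω ∂μ.prod (ν.prod ρ), α ω.1 ω.2.2 = H ω.2.2 - F ω.1 ∧
        β ω.1 ω.2.1 = F ω.1 + G ω.2.1 ∧ γ ω.2.1 ω.2.2 = -G ω.2.1 - H ω.2.2 ∧
        F ω.1 ^ 2 = 1 / 4 ∧ G ω.2.1 ^ 2 = 1 / 4 ∧ H ω.2.2 ^ 2 = 1 / 4 := by
  obtain ⟨F, G, H, hF, hG, hH, hF1, hsplit⟩ := exists_additive_splitting μ ν ρ hα hβ h
  set P := μ.prod (ν.prod ρ)
  have bF : BddMeas fun ω : X × Y × Z => F ω.1 := hF.comp (by fun_prop)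
  have bG : BddMeas fun ω : X × Y × Z => G ω.2.1 := hG.comp (by fun_prop)
  have bH : BddMeas fun ω : X × Y × Z => H ω.2.2 := hH.comp (by fun_prop)
  have eα : (fun ω : X × Y × Z => α ω.1 ω.2.2) =ᵐ[P] fun ω => H ω.2.2 - F ω.1 := by
    filter_upwards [hsplit] with ω h using h.1
  have eβ : (fun ω : X × Y × Z => β ω.1 ω.2.1) =ᵐ[P] fun ω => F ω.1 + G ω.2.1 := by
    filter_upwards [hsplit] with ω h using h.2.1
  have iFG : ∀ j k : ℕ, ∫ ω, F ω.1 ^ j * G ω.2.1 ^ k ∂P =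
      (∫ ω, F ω.1 ^ j ∂P) * ∫ ω, G ω.2.1 ^ k ∂P := fun j k =>
    integral_mul_fst μ ν ρ (fun x => F x ^ j) fun y _ => G y ^ k
  have iFH : ∀ j k : ℕ, ∫ ω, F ω.1 ^ j * H ω.2.2 ^ k ∂P =
      (∫ ω, F ω.1 ^ j ∂P) * ∫ ω, H ω.2.2 ^ k ∂P := fun j k =>
    integral_mul_fst μ ν ρ (fun x => F x ^ j) fun _ z => H z ^ k
  have iGH : ∫ ω, G ω.2.1 * H ω.2.2 ∂P = (∫ ω, G ω.2.1 ∂P) * ∫ ω, H ω.2.2 ∂P :=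
    integral_mul_snd μ ν ρ hG (g := fun _ z => H z) (hH.comp measurable_snd)
  have hG1 : ∫ ω, G ω.2.1 ∂P = 0 := by
    rw [integral_congr_ae eβ, integral_add (bF.integrable P) (bG.integrable P), hF1] at hβ1
    linarith
  have hH1 : ∫ ω, H ω.2.2 ∂P = 0 := by
    rw [integral_congr_ae eα, integral_sub (bH.integrable P) (bF.integrable P), hF1] at hα1
    linarith
  have iFG1 := iFG 1 1
  have iFH1 := iFH 1 1
  simp only [pow_one, hF1, hG1, hH1, mul_zero] at iFG1 iFH1 iGH
  have hF2 : ∫ ω, F ω.1 ^ 2 ∂P = 1 / 4 := by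
    have e : (fun ω : X × Y × Z => α ω.1 ω.2.2 * β ω.1 ω.2.1) =ᵐ[P] fun ω =>
        F ω.1 * H ω.2.2 + G ω.2.1 * H ω.2.2 - F ω.1 * G ω.2.1 - F ω.1 ^ 2 := by
      filter_upwards [eα, eβ] with ω h1 h2
      rw [h1, h2]
      ring
    rw [integral_congr_ae e, integral_sub, integral_sub, integral_add, iFG1, iFH1, iGH] at hαβ
    · linarith
    · exact (bF.mul bH).integrable P
    · exact (bG.mul bH).integrable P
    · exact ((bF.mul bH).add (bG.mul bH)).integrable P
    · exact (bF.mul bG).integrable P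
    · exact (((bF.mul bH).add (bG.mul bH)).sub (bF.mul bG)).integrable P
    · exact (bF.pow 2).integrable P
  have hG2 : ∫ ω, G ω.2.1 ^ 2 ∂P = 1 / 4 := by
    have e : (fun ω : X × Y × Z => β ω.1 ω.2.1 ^ 2) =ᵐ[P] fun ω =>
        F ω.1 ^ 2 + 2 * (F ω.1 * G ω.2.1) + G ω.2.1 ^ 2 := by
      filter_upwards [eβ] with ω h2
      rw [h2]
      ring
    rw [integral_congr_ae e, integral_add, integral_add, integral_const_mul, iFG1, hF2] at hβ2
    · linarith
    · exact (bF.pow 2).integrable P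
    · exact ((bF.mul bG).integrable P).const_mul _
    · exact ((bF.pow 2).add ((BddMeas.const 2).mul (bF.mul bG))).integrable P
    · exact (bG.pow 2).integrable P
  have hH2 : ∫ ω, H ω.2.2 ^ 2 ∂P = 1 / 4 := by
    have e : (fun ω : X × Y × Z => α ω.1 ω.2.2 ^ 2) =ᵐ[P] fun ω =>
        F ω.1 ^ 2 - 2 * (F ω.1 * H ω.2.2) + H ω.2.2 ^ 2 := by
      filter_upwards [eα] with ω h2
      rw [h2]
      ring
    rw [integral_congr_ae e, integral_add, integral_sub, integral_const_mul, iFH1, hF2] at hα2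
    · linarith
    · exact (bF.pow 2).integrable P
    · exact ((bF.mul bH).integrable P).const_mul _
    · exact ((bF.pow 2).sub ((BddMeas.const 2).mul (bF.mul bH))).integrable P
    · exact (bH.pow 2).integrable P
  have sF := sq_eq_quarter_of_cube_eq P bF bG iFG hF1 hG1 hF2 hG2 (by
    filter_upwards [hβ3, eβ] with ω h1 h2
    rw [h2] at h1
    exact h1)
  have sG := sq_eq_quarter_of_cube_eq P bG bF
    (fun j k => by simpa only [mul_comm] using iFG k j) hG1 hF1 hG2 hF2 (by
    filter_upwards [hβ3, eβ] with ω h1 h2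
    rw [h2, add_comm] at h1
    exact h1)
  have sH := sq_eq_quarter_of_cube_eq P bH bF.neg
    (fun j k => by
      have := iFH k j
      simp only [neg_pow (F _) k, mul_left_comm _ ((-1 : ℝ) ^ k), integral_const_mul]
      rw [mul_comm (∫ ω, H ω.2.2 ^ j ∂P), ← this]
      simp only [mul_comm]) hH1 (by rw [integral_neg, hF1, neg_zero]) hH2
      (by simpa using hF2) (by
    filter_upwards [hα3, eα] with ω h1 h2
    rw [h2, sub_eq_add_neg] at h1
    exact h1)
  refine ⟨F, G, H, hF, hG, hH, hF1, hG1, ?_⟩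
  filter_upwards [hsplit, sF, sG, sH] with ω h1 h2 h3 h4
  exact ⟨h1.1, h1.2.1, h1.2.2, h2, h3, h4⟩

end Core

theorem Outc.sum_eq (f : Outc → ℝ) :
    ∑ a, f a = f .zero + f (.one 0) + f (.one 1) + f .two := by
  have : (Finset.univ : Finset Outc) = {.zero, .one 0, .one 1, .two} := by decide
  rw [this]
  simp [add_assoc]

section Bound

variable {X Y Z : Type*} [MeasurableSpace X] [MeasurableSpace Y] [MeasurableSpace Z]

/-- Pointwise form of the token structure: outcome probabilities on the event described by the
signs `F`, `G`, `H`. -/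
structure TokenPoint (F G H w : ℝ) (q₁ q₂ q₃ : Outc → ℝ) : Prop where
  F_sq : F ^ 2 = 1 / 4
  G_sq : G ^ 2 = 1 / 4
  H_sq : H ^ 2 = 1 / 4
  two₁ : q₁ .two = (1 / 2 - F) * (1 / 2 + H)
  zero₁ : q₁ .zero = (1 / 2 + F) * (1 / 2 - H)
  two₂ : q₂ .two = (1 / 2 + F) * (1 / 2 + G)
  zero₂ : q₂ .zero = (1 / 2 - F) * (1 / 2 - G)
  two₃ : w * q₃ .two = w * ((1 / 2 - G) * (1 / 2 - H))
  zero₃ : w * q₃ .zero = w * ((1 / 2 + G) * (1 / 2 + H))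

/-- Pointwise form of token counting: every party has a deterministic token count, and the
excesses add up to zero. -/
structure CountPoint (w d : ℝ) (q₁ q₂ q₃ : Outc → ℝ) : Prop where
  total : q₁ .two - q₁ .zero + (q₂ .two - q₂ .zero) + (q₃ .two - q₃ .zero + d) = 0
  sq₁ : q₁ .two + q₁ .zero = (q₁ .two - q₁ .zero) ^ 2
  sq₂ : q₂ .two + q₂ .zero = (q₂ .two - q₂ .zero) ^ 2
  sq₃ : q₃ .two + q₃ .zero = (q₃ .two - q₃ .zero) ^ 2
  cube₁ : (q₁ .two - q₁ .zero) ^ 3 = q₁ .two - q₁ .zero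
  cube₂ : (q₂ .two - q₂ .zero) ^ 3 = q₂ .two - q₂ .zero
  merged : w * d = 0

theorem CountPoint.tokenPoint {F G H w d : ℝ} {q₁ q₂ q₃ : Outc → ℝ}
    (c : CountPoint w d q₁ q₂ q₃)
    (h₁ : q₁ .two - q₁ .zero = H - F) (h₂ : q₂ .two - q₂ .zero = F + G)
    (h₃ : q₃ .two - q₃ .zero + d = -G - H)
    (hF : F ^ 2 = 1 / 4) (hG : G ^ 2 = 1 / 4) (hH : H ^ 2 = 1 / 4) :
    TokenPoint F G H w q₁ q₂ q₃ := by
  obtain ⟨-, s₁, s₂, s₃, -, -, hwd⟩ := c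
  rw [h₁] at s₁
  rw [h₂] at s₂
  rw [show q₃ .two - q₃ .zero = -G - H - d by linarith] at s₃
  refine ⟨hF, hG, hH, ?_, ?_, ?_, ?_, ?_, ?_⟩
  · linear_combination (h₁ + s₁ + hF + hH) / 2
  · linear_combination (-h₁ + s₁ + hF + hH) / 2
  · linear_combination (h₂ + s₂ + hF + hG) / 2
  · linear_combination (-h₂ + s₂ + hF + hG) / 2
  · linear_combination w / 2 * (h₃ + s₃ + hG + hH) + (2 * G + 2 * H + d - 1) / 2 * hwd
  · linear_combination w / 2 * (-h₃ + s₃ + hG + hH) + (2 * G + 2 * H + d + 1) / 2 * hwd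

theorem TokenPoint.bound {F G H w : ℝ} {q₁ q₂ q₃ : Outc → ℝ} (h : TokenPoint F G H w q₁ q₂ q₃)
    (n₁ : ∀ a, 0 ≤ q₁ a) (n₂ : ∀ a, 0 ≤ q₂ a) (n₃ : ∀ a, 0 ≤ q₃ a)
    (s₁ : ∑ a, q₁ a = 1) (s₂ : ∑ a, q₂ a = 1) (s₃ : ∑ a, q₃ a = 1) (hw : 0 ≤ w) :
    (1 / 2 + F) * ((1 / 2 - G) * ((1 / 2 + H) * w))
      - (1 / 2 - G) * ((1 / 2 + F) * ((1 / 2 + H) * w * q₁ (.one 0)))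
      - (1 / 2 + H) * w * ((1 / 2 + F) * (1 / 2 - G) * q₂ (.one 0))
      - (1 / 2 + F) * ((1 / 2 - G) * ((1 / 2 + H) * w * q₃ (.one 0)))
      ≤ q₁ (.one 1) * q₂ (.one 1) * q₃ (.one 1) * w := by
  have key := mul_nonneg (mul_nonneg (mul_nonneg (n₁ (.one 1)) (n₂ (.one 1))) (n₃ (.one 1))) hw
  rw [Outc.sum_eq] at s₁ s₂ s₃
  obtain ⟨hF, hG, hH, t₁, z₁, t₂, z₂, t₃, z₃⟩ := h
  have sq : ∀ x : ℝ, x ^ 2 = 1 / 4 → x = 1 / 2 ∨ x = -(1 / 2) := fun x hx => by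
    rw [← sq_eq_sq_iff_eq_or_eq_neg]
    linarith
  rcases sq F hF with rfl | rfl <;> rcases sq G hG with rfl | rfl <;>
    rcases sq H hH with rfl | rfl <;> norm_num at * <;> try exact key
  rcases hw.eq_or_lt with rfl | hw
  · simp
  have t₃ : q₃ .two = 0 := by rcases t₃ with h | h <;> linarith
  have z₃ : q₃ .zero = 0 := by rcases z₃ with h | h <;> linarith
  have a₁ : q₁ (.one 0) = 1 - q₁ (.one 1) := by linarith
  have a₂ : q₂ (.one 0) = 1 - q₂ (.one 1) := by linarith
  have a₃ : q₃ (.one 0) = 1 - q₃ (.one 1) := by linarith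
  have b₁ := n₁ (.one 0)
  have b₂ := n₂ (.one 0)
  have b₃ := n₃ (.one 0)
  have c₃ := n₃ (.one 1)
  have c₂ := n₂ (.one 1)
  rw [a₁] at b₁
  rw [a₂] at b₂
  rw [a₃] at b₃
  rw [a₁, a₂, a₃]
  have h1 : 0 ≤ (1 - q₁ (.one 1)) * (1 - q₂ (.one 1)) := mul_nonneg b₁ b₂
  have h2 : 0 ≤ (1 - q₁ (.one 1) * q₂ (.one 1)) * (1 - q₃ (.one 1)) := by
    refine mul_nonneg ?_ b₃
    nlinarith
  nlinarith [mul_nonneg hw.le (add_nonneg h1 h2)]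

variable (μ : Measure X) (ν : Measure Y) (ρ : Measure Z)

/-- A local model on the network whose responses obey token counting. Here `w` is the probability
that the merged party gives a fixed outcome, and `d` is its mean token excess. -/
structure TokenModel (p₁ : Outc → X → Z → ℝ) (p₂ : Outc → X → Y → ℝ)
    (p₃ : Outc → Y → Z → ℝ) (w d : Z → ℝ) : Prop where
  b₁ : ∀ a, BddMeas (Function.uncurry (p₁ a))
  b₂ : ∀ a, BddMeas (Function.uncurry (p₂ a))
  b₃ : ∀ a, BddMeas (Function.uncurry (p₃ a))
  bw : BddMeas w
  n₁ : ∀ a x z, 0 ≤ p₁ a x z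
  n₂ : ∀ a x y, 0 ≤ p₂ a x y
  n₃ : ∀ a y z, 0 ≤ p₃ a y z
  nw : ∀ z, 0 ≤ w z
  s₁ : ∀ x z, ∑ a, p₁ a x z = 1
  s₂ : ∀ x y, ∑ a, p₂ a x y = 1
  s₃ : ∀ y z, ∑ a, p₃ a y z = 1
  count : ∀ᵐ ω ∂μ.prod (ν.prod ρ), CountPoint (w ω.2.2) (d ω.2.2)
    (fun a => p₁ a ω.1 ω.2.2) (fun a => p₂ a ω.1 ω.2.1) (fun a => p₃ a ω.2.1 ω.2.2)
  mean₁ : ∫ ω, (p₁ .two ω.1 ω.2.2 - p₁ .zero ω.1 ω.2.2) ∂μ.prod (ν.prod ρ) = 0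
  mean₂ : ∫ ω, (p₂ .two ω.1 ω.2.1 - p₂ .zero ω.1 ω.2.1) ∂μ.prod (ν.prod ρ) = 0
  var₁ : ∫ ω, (p₁ .two ω.1 ω.2.2 + p₁ .zero ω.1 ω.2.2) ∂μ.prod (ν.prod ρ) = 1 / 2
  var₂ : ∫ ω, (p₂ .two ω.1 ω.2.1 + p₂ .zero ω.1 ω.2.1) ∂μ.prod (ν.prod ρ) = 1 / 2
  cov : ∫ ω, (p₁ .two ω.1 ω.2.2 - p₁ .zero ω.1 ω.2.2)
    * (p₂ .two ω.1 ω.2.1 - p₂ .zero ω.1 ω.2.1) ∂μ.prod (ν.prod ρ) = -(1 / 4)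

variable {μ ν ρ}

/-- The reflection of outcomes which exchanges the presence and the absence of tokens. -/
def Outc.reflect : Outc → Outc
  | .zero => .two
  | .one k => .one k.rev
  | .two => .zero

theorem TokenModel.reflect {p₁ : Outc → X → Z → ℝ} {p₂ : Outc → X → Y → ℝ}
    {p₃ : Outc → Y → Z → ℝ} {w d : Z → ℝ} (h : TokenModel μ ν ρ p₁ p₂ p₃ w d) :
    TokenModel μ ν ρ (fun a => p₁ a.reflect) (fun a => p₂ a.reflect) (fun a => p₃ a.reflect) w
      (fun z => -d z) where
  b₁ a := h.b₁ _
  b₂ a := h.b₂ _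
  b₃ a := h.b₃ _
  bw := h.bw
  n₁ a := h.n₁ _
  n₂ a := h.n₂ _
  n₃ a := h.n₃ _
  nw := h.nw
  s₁ x z := by
    rw [← h.s₁ x z, Outc.sum_eq, Outc.sum_eq]
    simp only [Outc.reflect, show (0 : Fin 2).rev = 1 from rfl, show (1 : Fin 2).rev = 0 from rfl]
    ring
  s₂ x z := by
    rw [← h.s₂ x z, Outc.sum_eq, Outc.sum_eq]
    simp only [Outc.reflect, show (0 : Fin 2).rev = 1 from rfl, show (1 : Fin 2).rev = 0 from rfl]
    ring
  s₃ x z := by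
    rw [← h.s₃ x z, Outc.sum_eq, Outc.sum_eq]
    simp only [Outc.reflect, show (0 : Fin 2).rev = 1 from rfl, show (1 : Fin 2).rev = 0 from rfl]
    ring
  count := h.count.mono fun ω c => by
    obtain ⟨h0, h1, h2, h3, h4, h5, h6⟩ := c
    refine ⟨?_, ?_, ?_, ?_, ?_, ?_, by linear_combination -h6⟩ <;> simp only [Outc.reflect]
    · linear_combination -h0
    · linear_combination h1
    · linear_combination h2
    · linear_combination h3
    · linear_combination -h4
    · linear_combination -h5
  mean₁ := by
    have := h.mean₁
    rw [← neg_eq_zero, ← integral_neg] at this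
    simpa only [neg_sub, Outc.reflect] using this
  mean₂ := by
    have := h.mean₂
    rw [← neg_eq_zero, ← integral_neg] at this
    simpa only [neg_sub, Outc.reflect] using this
  var₁ := by
    rw [← h.var₁]
    congr 1 with ω
    simp only [Outc.reflect]
    ring
  var₂ := by
    rw [← h.var₂]
    congr 1 with ω
    simp only [Outc.reflect]
    ring
  cov := by
    rw [← h.cov]
    congr 1 with ω
    simp only [Outc.reflect]
    ring

variable [IsProbabilityMeasure μ] [IsProbabilityMeasure ν] [IsProbabilityMeasure ρ]

/-- In a local model obeying token counting, the probability of the joint outcome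
`(1₁, 1₁, 1₁, m)` is bounded below in terms of the outcomes in which the token directions are
revealed. -/
theorem TokenModel.lower_bound {p₁ : Outc → X → Z → ℝ} {p₂ : Outc → X → Y → ℝ}
    {p₃ : Outc → Y → Z → ℝ} {w d : Z → ℝ} (h : TokenModel μ ν ρ p₁ p₂ p₃ w d)
    {A B : ℝ} {r : Fin 2 → ℝ} (hA : A ≠ 0) (hr : r 0 + r 1 = 1)
    (hP₃ : ∀ k, ∫ ω, p₁ .two ω.1 ω.2.2 * p₂ .zero ω.1 ω.2.1 * p₃ (.one k) ω.2.1 ω.2.2 * w ω.2.2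
      ∂μ.prod (ν.prod ρ) = B * r k)
    (hP₁ : ∀ k, ∫ ω, p₁ (.one k) ω.1 ω.2.2 * p₂ .two ω.1 ω.2.1 * p₃ .zero ω.2.1 ω.2.2 * w ω.2.2
      ∂μ.prod (ν.prod ρ) = B * r k)
    (hP₂ : ∀ k, ∫ ω, p₁ .zero ω.1 ω.2.2 * p₂ (.one k) ω.1 ω.2.1 * p₃ .two ω.2.1 ω.2.2 * w ω.2.2
      ∂μ.prod (ν.prod ρ) = A * r k) :
    B * (1 - 3 * r 0) ≤ ∫ ω, p₁ (.one 1) ω.1 ω.2.2 * p₂ (.one 1) ω.1 ω.2.1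
      * p₃ (.one 1) ω.2.1 ω.2.2 * w ω.2.2 ∂μ.prod (ν.prod ρ) := by
  obtain ⟨b₁, b₂, b₃, bw, n₁, n₂, n₃, nw, s₁, s₂, s₃, hcount, hα1, hβ1, hα2, hβ2, hαβ⟩ := h
  set P := μ.prod (ν.prod ρ)
  obtain ⟨F, G, H, hF, hG, hH, hF1, hG1, hT⟩ := exists_token_functions μ ν ρ
    (α := fun x z => p₁ .two x z - p₁ .zero x z) (β := fun x y => p₂ .two x y - p₂ .zero x y)
    (γ := fun y z => p₃ .two y z - p₃ .zero y z + d z)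
    ((b₁ _).sub (b₁ _)) ((b₂ _).sub (b₂ _))
    (hcount.mono fun ω h => h.total) (hcount.mono fun ω h => h.cube₁)
    (hcount.mono fun ω h => h.cube₂) hα1 hβ1
    ((integral_congr_ae (hcount.mono fun ω h => h.sq₁.symm)).trans hα2)
    ((integral_congr_ae (hcount.mono fun ω h => h.sq₂.symm)).trans hβ2) hαβ
  have tok : ∀ᵐ ω ∂P, TokenPoint (F ω.1) (G ω.2.1) (H ω.2.2) (w ω.2.2)
      (fun a => p₁ a ω.1 ω.2.2) (fun a => p₂ a ω.1 ω.2.1) (fun a => p₃ a ω.2.1 ω.2.2) := by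
    filter_upwards [hT, hcount] with ω h c
    exact c.tokenPoint h.1 h.2.1 h.2.2.1 h.2.2.2.1 h.2.2.2.2.1 h.2.2.2.2.2
  have c₁ : ∀ a, BddMeas fun ω : X × Y × Z => p₁ a ω.1 ω.2.2 := fun a =>
    (b₁ a).comp (h := fun ω : X × Y × Z => (ω.1, ω.2.2)) (by fun_prop)
  have c₂ : ∀ a, BddMeas fun ω : X × Y × Z => p₂ a ω.1 ω.2.1 := fun a =>
    (b₂ a).comp (h := fun ω : X × Y × Z => (ω.1, ω.2.1)) (by fun_prop)
  have c₃ : ∀ a, BddMeas fun ω : X × Y × Z => p₃ a ω.2.1 ω.2.2 := fun a =>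
    (b₃ a).comp (h := fun ω : X × Y × Z => (ω.2.1, ω.2.2)) (by fun_prop)
  have cw : BddMeas fun ω : X × Y × Z => w ω.2.2 := bw.comp (by fun_prop)
  have eF : BddMeas fun x => 1 / 2 + F x := (BddMeas.const _).add hF
  have eG : BddMeas fun y => 1 / 2 - G y := (BddMeas.const _).sub hG
  have eH : BddMeas fun z => (1 / 2 + H z) * w z := ((BddMeas.const _).add hH).mul bw
  have eH' : BddMeas fun z => (1 / 2 - H z) * w z := ((BddMeas.const _).sub hH).mul bw
  have cF : BddMeas fun ω : X × Y × Z => 1 / 2 + F ω.1 := eF.comp (by fun_prop)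
  have cG : BddMeas fun ω : X × Y × Z => 1 / 2 - G ω.2.1 := eG.comp (by fun_prop)
  have cH : BddMeas fun ω : X × Y × Z => (1 / 2 + H ω.2.2) * w ω.2.2 := eH.comp (by fun_prop)
  have iF : ∫ ω, (1 / 2 + F ω.1) ∂P = 1 / 2 := by
    rw [integral_add (integrable_const _) ((hF.comp measurable_fst).integrable P), hF1]
    simp
  have iF' : ∫ ω, (1 / 2 - F ω.1) ∂P = 1 / 2 := by
    rw [integral_sub (integrable_const _) ((hF.comp measurable_fst).integrable P), hF1]
    simp
  have bGΩ : BddMeas fun ω : X × Y × Z => G ω.2.1 := hG.comp (by fun_prop)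
  have iG : ∫ ω, (1 / 2 - G ω.2.1) ∂P = 1 / 2 := by
    rw [integral_sub (integrable_const _) (bGΩ.integrable P), hG1]
    simp
  have iG' : ∫ ω, (1 / 2 + G ω.2.1) ∂P = 1 / 2 := by
    rw [integral_add (integrable_const _) (bGΩ.integrable P), hG1]
    simp
  set J := ∫ ω, (1 / 2 + H ω.2.2) * w ω.2.2 ∂P with hJ
  set J' := ∫ ω, (1 / 2 - H ω.2.2) * w ω.2.2 ∂P with hJ'
  have K₃ : ∀ k, ∫ ω, (1 / 2 - G ω.2.1) * ((1 / 2 + H ω.2.2) * w ω.2.2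
      * p₃ (.one k) ω.2.1 ω.2.2) ∂P = 2 * (B * r k) := fun k => by
    have e : (fun ω : X × Y × Z => p₁ .two ω.1 ω.2.2 * p₂ .zero ω.1 ω.2.1
        * p₃ (.one k) ω.2.1 ω.2.2 * w ω.2.2) =ᵐ[P] fun ω => (1 / 2 - F ω.1) *
          ((1 / 2 - G ω.2.1) * ((1 / 2 + H ω.2.2) * w ω.2.2 * p₃ (.one k) ω.2.1 ω.2.2)) := by
      filter_upwards [tok] with ω h
      rw [h.two₁, h.zero₂]
      linear_combination ((1 / 2 + H ω.2.2) * w ω.2.2 * p₃ (.one k) ω.2.1 ω.2.2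
        * (1 / 2 - G ω.2.1)) * h.F_sq
    have h := hP₃ k
    rw [integral_congr_ae e, integral_mul_fst μ ν ρ (fun x => 1 / 2 - F x)
      fun y z => (1 / 2 - G y) * ((1 / 2 + H z) * w z * p₃ (.one k) y z), iF'] at h
    linarith
  have hJB : J = 4 * B := by
    have e : (fun ω : X × Y × Z => (1 / 2 - G ω.2.1) * ((1 / 2 + H ω.2.2) * w ω.2.2
        * p₃ (.one 0) ω.2.1 ω.2.2) + (1 / 2 - G ω.2.1) * ((1 / 2 + H ω.2.2) * w ω.2.2
        * p₃ (.one 1) ω.2.1 ω.2.2)) =ᵐ[P]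
        fun ω => (1 / 2 - G ω.2.1) * ((1 / 2 + H ω.2.2) * w ω.2.2) := by
      filter_upwards [tok] with ω h
      have s := s₃ ω.2.1 ω.2.2
      rw [Outc.sum_eq] at s
      linear_combination (1 / 2 - G ω.2.1) * (1 / 2 + H ω.2.2) * w ω.2.2 * s
        - (1 / 2 - G ω.2.1) * (1 / 2 + H ω.2.2) * (h.two₃ + h.zero₃)
        + (1 / 2 - G ω.2.1) ^ 2 * w ω.2.2 * h.H_sq
        + (1 / 2 + H ω.2.2) ^ 2 * w ω.2.2 * h.G_sq
    have h := integral_congr_ae e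
    rw [integral_add ((cG.mul (cH.mul (c₃ _))).integrable P)
      ((cG.mul (cH.mul (c₃ _))).integrable P), K₃, K₃,
      integral_mul_snd μ ν ρ eG (g := fun _ z => (1 / 2 + H z) * w z)
        (eH.comp measurable_snd), iG, ← hJ] at h
    linear_combination -2 * h + 4 * B * hr
  have K₁ : ∫ ω, (1 / 2 - G ω.2.1) * ((1 / 2 + F ω.1) * ((1 / 2 + H ω.2.2) * w ω.2.2
      * p₁ (.one 0) ω.1 ω.2.2)) ∂P = B * r 0 := by
    have bg : BddMeas (Function.uncurry fun x z =>
        (1 / 2 + F x) * ((1 / 2 + H z) * w z * p₁ (.one 0) x z)) :=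
      (eF.comp measurable_fst).mul ((eH.comp measurable_snd).mul (b₁ _))
    have e : (fun ω : X × Y × Z => p₁ (.one 0) ω.1 ω.2.2 * p₂ .two ω.1 ω.2.1
        * p₃ .zero ω.2.1 ω.2.2 * w ω.2.2) =ᵐ[P] fun ω => (1 / 2 + G ω.2.1) *
          ((1 / 2 + F ω.1) * ((1 / 2 + H ω.2.2) * w ω.2.2 * p₁ (.one 0) ω.1 ω.2.2)) := by
      filter_upwards [tok] with ω h
      rw [h.two₂]
      linear_combination p₁ (.one 0) ω.1 ω.2.2 * (1 / 2 + F ω.1) * (1 / 2 + G ω.2.1) * h.zero₃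
        + p₁ (.one 0) ω.1 ω.2.2 * (1 / 2 + F ω.1) * (1 / 2 + H ω.2.2) * w ω.2.2 * h.G_sq
    have h := hP₁ 0
    rw [integral_congr_ae e, integral_mul_snd μ ν ρ ((BddMeas.const _).add hG) bg, iG'] at h
    rw [integral_mul_snd μ ν ρ eG bg, iG, h]
  have bk : ∀ k, BddMeas (Function.uncurry fun x y =>
      (1 / 2 + F x) * (1 / 2 - G y) * p₂ (.one k) x y) := fun k =>
    ((eF.comp measurable_fst).mul (eG.comp measurable_snd)).mul (b₂ _)
  have K₂ : ∀ k, J' * ∫ ω, (1 / 2 + F ω.1) * (1 / 2 - G ω.2.1) * p₂ (.one k) ω.1 ω.2.1 ∂P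
      = A * r k := fun k => by
    have e : (fun ω : X × Y × Z => p₁ .zero ω.1 ω.2.2 * p₂ (.one k) ω.1 ω.2.1
        * p₃ .two ω.2.1 ω.2.2 * w ω.2.2) =ᵐ[P] fun ω => (1 / 2 - H ω.2.2) * w ω.2.2 *
          ((1 / 2 + F ω.1) * (1 / 2 - G ω.2.1) * p₂ (.one k) ω.1 ω.2.1) := by
      filter_upwards [tok] with ω h
      rw [h.zero₁]
      linear_combination
        (1 / 2 + F ω.1) * (1 / 2 - H ω.2.2) * p₂ (.one k) ω.1 ω.2.1 * h.two₃
        + (1 / 2 + F ω.1) * (1 / 2 - G ω.2.1) * p₂ (.one k) ω.1 ω.2.1 * w ω.2.2 * h.H_sq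
    have h := hP₂ k
    rw [integral_congr_ae e, integral_mul_thd μ ν ρ eH' (bk k)] at h
    exact h
  have S₂ : ∫ ω, (1 / 2 + F ω.1) * (1 / 2 - G ω.2.1) * p₂ (.one 0) ω.1 ω.2.1 ∂P +
      ∫ ω, (1 / 2 + F ω.1) * (1 / 2 - G ω.2.1) * p₂ (.one 1) ω.1 ω.2.1 ∂P = 1 / 4 := by
    rw [← integral_add (((cF.mul cG).mul (c₂ _)).integrable P)
      (((cF.mul cG).mul (c₂ _)).integrable P)]
    have e : (fun ω : X × Y × Z => (1 / 2 + F ω.1) * (1 / 2 - G ω.2.1) * p₂ (.one 0) ω.1 ω.2.1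
        + (1 / 2 + F ω.1) * (1 / 2 - G ω.2.1) * p₂ (.one 1) ω.1 ω.2.1) =ᵐ[P]
        fun ω => (1 / 2 + F ω.1) * (1 / 2 - G ω.2.1) := by
      filter_upwards [tok] with ω h
      have s := s₂ ω.1 ω.2.1
      rw [Outc.sum_eq] at s
      linear_combination (1 / 2 + F ω.1) * (1 / 2 - G ω.2.1) * (s - h.two₂ - h.zero₂)
        + (1 / 2 - G ω.2.1) ^ 2 * h.F_sq + (1 / 2 + F ω.1) ^ 2 * h.G_sq
    rw [integral_congr_ae e, integral_mul_fst μ ν ρ (fun x => 1 / 2 + F x)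
      fun y _ => 1 / 2 - G y, iF, iG]
    norm_num
  have hJA : J' = 4 * A := by
    linear_combination 4 * (K₂ 0 + K₂ 1) - 4 * J' * S₂ + 4 * A * hr
  have K₂' : J * ∫ ω, (1 / 2 + F ω.1) * (1 / 2 - G ω.2.1) * p₂ (.one 0) ω.1 ω.2.1 ∂P
      = B * r 0 := by
    have h := K₂ 0
    rw [hJA] at h
    have : 4 * ∫ ω, (1 / 2 + F ω.1) * (1 / 2 - G ω.2.1) * p₂ (.one 0) ω.1 ω.2.1 ∂P = r 0 :=
      mul_left_cancel₀ hA (by linear_combination h)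
    rw [hJB]
    linear_combination B * this
  have base : ∫ ω, (1 / 2 + F ω.1) * ((1 / 2 - G ω.2.1) * ((1 / 2 + H ω.2.2) * w ω.2.2)) ∂P
      = B := by
    rw [integral_mul_fst μ ν ρ (fun x => 1 / 2 + F x)
      fun y z => (1 / 2 - G y) * ((1 / 2 + H z) * w z), iF,
      integral_mul_snd μ ν ρ eG (g := fun _ z => (1 / 2 + H z) * w z)
        (eH.comp measurable_snd), iG, ← hJ, hJB]
    ring
  have L₂ : ∫ ω, (1 / 2 + H ω.2.2) * w ω.2.2 *
      ((1 / 2 + F ω.1) * (1 / 2 - G ω.2.1) * p₂ (.one 0) ω.1 ω.2.1) ∂P = B * r 0 := by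
    rw [integral_mul_thd μ ν ρ eH (bk 0), ← hJ, K₂']
  have L₃ : ∫ ω, (1 / 2 + F ω.1) * ((1 / 2 - G ω.2.1) * ((1 / 2 + H ω.2.2) * w ω.2.2
      * p₃ (.one 0) ω.2.1 ω.2.2)) ∂P = B * r 0 := by
    rw [integral_mul_fst μ ν ρ (fun x => 1 / 2 + F x)
      fun y z => (1 / 2 - G y) * ((1 / 2 + H z) * w z * p₃ (.one 0) y z), iF, K₃]
    ring
  have i₀ := (cF.mul (cG.mul cH)).integrable P
  have i₁ := (cG.mul (cF.mul (cH.mul (c₁ (.one 0))))).integrable P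
  have i₂ := (cH.mul ((cF.mul cG).mul (c₂ (.one 0)))).integrable P
  have i₃ := (cF.mul (cG.mul (cH.mul (c₃ (.one 0))))).integrable P
  calc B * (1 - 3 * r 0) = B - B * r 0 - B * r 0 - B * r 0 := by ring
    _ = ∫ ω, ((1 / 2 + F ω.1) * ((1 / 2 - G ω.2.1) * ((1 / 2 + H ω.2.2) * w ω.2.2))
      - (1 / 2 - G ω.2.1) * ((1 / 2 + F ω.1) * ((1 / 2 + H ω.2.2) * w ω.2.2
        * p₁ (.one 0) ω.1 ω.2.2))
      - (1 / 2 + H ω.2.2) * w ω.2.2 * ((1 / 2 + F ω.1) * (1 / 2 - G ω.2.1)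
        * p₂ (.one 0) ω.1 ω.2.1)
      - (1 / 2 + F ω.1) * ((1 / 2 - G ω.2.1) * ((1 / 2 + H ω.2.2) * w ω.2.2
        * p₃ (.one 0) ω.2.1 ω.2.2))) ∂P := by
      rw [integral_sub ?_ i₃, integral_sub ?_ i₂, integral_sub i₀ i₁, base, K₁, L₂, L₃]
      · exact i₀.sub i₁
      · exact (i₀.sub i₁).sub i₂
    _ ≤ _ := by
      refine integral_mono_ae (((i₀.sub i₁).sub i₂).sub i₃)
        (((((c₁ _).mul (c₂ _)).mul (c₃ _)).mul cw).integrable P) ?_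
      filter_upwards [tok] with ω h
      exact h.bound (fun a => n₁ a _ _) (fun a => n₂ a _ _) (fun a => n₃ a _ _)
        (s₁ _ _) (s₂ _ _) (s₃ _ _) (nw _)

end Bound

section Quantum

/-- The token excess of an outcome. -/
def Outc.excess : Outc → ℝ
  | .zero => -1
  | .one _ => 0
  | .two => 1

theorem basisVec_excess {u : ℝ} {a : Outc} {l r : Fin 2} (h : basisVec u a l r.rev ≠ 0) :
    a.excess = (l : ℝ) - (r : ℝ) := by
  cases a <;> fin_cases l <;> fin_cases r <;> simp [basisVec, Outc.excess] at h ⊢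

theorem basisVec_one_eq {u : ℝ} {i l r : Fin 2} (h : basisVec u (.one i) l r.rev ≠ 0) :
    l = r := by
  fin_cases l <;> fin_cases r <;> simp [basisVec] at h ⊢

theorem basisVec_complete {u : ℝ} (h0 : 0 < u) (h1 : u < 1) (l r l' r' : Fin 2) :
    ∑ a, basisVec u a l r * basisVec u a l' r' = if l = l' ∧ r = r' then 1 else 0 := by
  have := Real.sq_sqrt (show 0 ≤ 1 - u ^ 2 by nlinarith)
  rw [Outc.sum_eq]
  fin_cases l <;> fin_cases r <;> fin_cases l' <;> fin_cases r' <;>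
    simp [basisVec, uco, vco] <;> nlinarith

theorem ringAmp_eq (N : ℕ) (u : ℝ) (a : Fin N → Outc) :
    ringAmp N u a = (Real.sqrt 2)⁻¹ ^ N *
      ∑ L : Fin N → Fin 2, ∏ k, basisVec u (a k) (L k) (L (finNext k)).rev := by
  rw [ringAmp, Finset.mul_sum]
  refine Finset.sum_congr rfl fun L _ => ?_
  have h : ∀ k, ∑ r : Fin 2, basisVec u (a k) (L k) r * psiPlus r (L (finNext k)) =
      (Real.sqrt 2)⁻¹ * basisVec u (a k) (L k) (L (finNext k)).rev := fun k => by
    generalize L (finNext k) = l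
    fin_cases l <;> simp [psiPlus, mul_comm]
  have h2 := Finset.prod_univ_sum (fun _ : Fin N => (Finset.univ : Finset (Fin 2)))
    fun k r => basisVec u (a k) (L k) r * psiPlus r (L (finNext k))
  simp only [h, Fintype.piFinset_univ, Finset.prod_mul_distrib, Finset.prod_const,
    Finset.card_univ, Fintype.card_fin] at h2
  exact h2.symm

theorem finNext_bijective (N : ℕ) : Function.Bijective (finNext (N := N)) := by
  refine Finite.injective_iff_bijective.1 fun i j h => ?_
  have hi := i.isLt
  have hj := j.isLt
  simp only [finNext, Fin.mk.injEq] at h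
  ext
  rcases Nat.lt_or_ge (i.val + 1) N with h1 | h1 <;> rcases Nat.lt_or_ge (j.val + 1) N with h2 | h2
  · rw [Nat.mod_eq_of_lt h1, Nat.mod_eq_of_lt h2] at h
    omega
  · rw [Nat.mod_eq_of_lt h1, show j.val + 1 = N by omega, Nat.mod_self] at h
    omega
  · rw [Nat.mod_eq_of_lt h2, show i.val + 1 = N by omega, Nat.mod_self] at h
    omega
  · omega

theorem sum_excess_eq_zero {N : ℕ} {u : ℝ} {a : Fin N → Outc} (h : ringP N u a ≠ 0) :
    ∑ k, (a k).excess = 0 := by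
  rw [ringP, ringAmp_eq] at h
  obtain ⟨L, -, hL⟩ := Finset.exists_ne_zero_of_sum_ne_zero
    (right_ne_zero_of_mul (ne_zero_pow two_ne_zero h))
  rw [Finset.prod_ne_zero_iff] at hL
  rw [Finset.sum_congr rfl fun k hk => basisVec_excess (hL k hk), Finset.sum_sub_distrib,
    (finNext_bijective N).sum_comp fun k => ((L k : ℕ) : ℝ), sub_self]

/-- Token counts in the ring are distributed as for uniformly random source directions. -/
theorem sum_ringP_excess (N : ℕ) {u : ℝ} (h0 : 0 < u) (h1 : u < 1) (g : (Fin N → ℝ) → ℝ) :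
    ∑ a : Fin N → Outc, g (fun k => (a k).excess) * ringP N u a =
      (1 / 2) ^ N * ∑ L : Fin N → Fin 2, g fun k => (L k : ℝ) - (L (finNext k) : ℝ) := by
  have hc : ((Real.sqrt 2)⁻¹ ^ N) ^ 2 = (1 / 2 : ℝ) ^ N := by
    rw [← pow_mul, mul_comm, pow_mul, inv_pow, Real.sq_sqrt zero_le_two, one_div]
  set b : (Fin N → Outc) → (Fin N → Fin 2) → ℝ := fun a L =>
    ∏ k, basisVec u (a k) (L k) (L (finNext k)).rev with hb
  have hg : ∀ a L, g (fun k => (a k).excess) * b a L =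
      g (fun k => (L k : ℝ) - (L (finNext k) : ℝ)) * b a L := fun a L => by
    by_cases h : b a L = 0
    · simp [h]
    · have h := Finset.prod_ne_zero_iff.1 h
      congr 2
      ext k
      exact basisVec_excess (h k (Finset.mem_univ _))
  have orth : ∀ L L', ∑ a, b a L * b a L' = if L = L' then 1 else 0 := fun L L' => by
    have h2 := Finset.prod_univ_sum (fun _ : Fin N => (Finset.univ : Finset Outc))
      fun k a => basisVec u a (L k) (L (finNext k)).rev * basisVec u a (L' k) (L' (finNext k)).rev
    simp only [basisVec_complete h0 h1, Fintype.piFinset_univ, Finset.prod_mul_distrib] at h2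
    rw [← h2, Fintype.prod_ite_zero]
    simp only [Finset.prod_const_one, Fin.rev_inj]
    refine if_congr ⟨fun h => funext fun k => (h k).1, fun h => by simp [h]⟩ rfl rfl
  calc ∑ a : Fin N → Outc, g (fun k => (a k).excess) * ringP N u a
      = ∑ a, (1 / 2) ^ N * ∑ L, ∑ L', g (fun k => (L k : ℝ) - (L (finNext k) : ℝ)) *
          (b a L * b a L') := by
        refine Finset.sum_congr rfl fun a _ => ?_
        rw [ringP, ringAmp_eq, mul_pow, hc, sq, Finset.sum_mul_sum, mul_left_comm, Finset.mul_sum]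
        refine congrArg _ (Finset.sum_congr rfl fun L _ => ?_)
        rw [Finset.mul_sum]
        refine Finset.sum_congr rfl fun L' _ => ?_
        rw [← mul_assoc, ← mul_assoc]
        exact congrArg (· * _) (hg a L)
    _ = _ := by
        rw [← Finset.mul_sum, Finset.sum_comm]
        refine congrArg _ (Finset.sum_congr rfl fun L _ => ?_)
        rw [Finset.sum_comm]
        simp only [← Finset.mul_sum, orth]
        simp

theorem sum_flip_eq_zero {N : ℕ} (i : Fin N) (f : (Fin N → Fin 2) → ℝ)
    (hf : ∀ L, f (Function.update L i (L i).rev) = -f L) : ∑ L, f L = 0 := by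
  have hinv : Function.Involutive fun L : Fin N → Fin 2 => Function.update L i (L i).rev :=
    fun L => by simp
  have h := hinv.bijective.sum_comp f
  simp only [hf, Finset.sum_neg_distrib] at h
  linarith

theorem sum_spin {N : ℕ} (i : Fin N) : ∑ L : Fin N → Fin 2, ((L i : ℝ) - 1 / 2) = 0 := by
  refine sum_flip_eq_zero i _ fun L => ?_
  rw [Function.update_self]
  generalize L i = l
  fin_cases l <;> norm_num

theorem sum_spin_mul {N : ℕ} {i j : Fin N} (hij : i ≠ j) :
    ∑ L : Fin N → Fin 2, ((L i : ℝ) - 1 / 2) * ((L j : ℝ) - 1 / 2) = 0 := by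
  refine sum_flip_eq_zero i _ fun L => ?_
  rw [Function.update_self, Function.update_of_ne hij.symm, ← neg_mul]
  congr 1
  generalize L i = l
  fin_cases l <;> norm_num

theorem spin_sq (l : Fin 2) : ((l : ℝ) - 1 / 2) ^ 2 = 1 / 4 := by
  fin_cases l <;> norm_num

theorem half_pow_mul_card (N : ℕ) (c : ℝ) :
    (1 / 2 : ℝ) ^ N * ∑ _L : Fin N → Fin 2, c = c := by
  simp

/-- The token excess of every party has mean zero. -/
theorem sum_excess_mean {N : ℕ} {u : ℝ} (h0 : 0 < u) (h1 : u < 1) (i : Fin N) :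
    ∑ a : Fin N → Outc, (a i).excess * ringP N u a = 0 := by
  have h := sum_ringP_excess N h0 h1 fun c => c i
  rw [h]
  have e : ∀ L : Fin N → Fin 2, (L i : ℝ) - (L (finNext i) : ℝ) =
      ((L i : ℝ) - 1 / 2) - ((L (finNext i) : ℝ) - 1 / 2) := fun L => by ring
  simp only [e, Finset.sum_sub_distrib (fun L : Fin N → Fin 2 => ((L i : ℝ) - 1 / 2)), sum_spin]
  simp

theorem sum_excess_sq {N : ℕ} {u : ℝ} (h0 : 0 < u) (h1 : u < 1) {i : Fin N}
    (hi : i ≠ finNext i) : ∑ a : Fin N → Outc, (a i).excess ^ 2 * ringP N u a = 1 / 2 := by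
  have h := sum_ringP_excess N h0 h1 fun c => c i ^ 2
  rw [h]
  have e : ∀ L : Fin N → Fin 2, ((L i : ℝ) - (L (finNext i) : ℝ)) ^ 2 =
      1 / 2 - 2 * (((L i : ℝ) - 1 / 2) * ((L (finNext i) : ℝ) - 1 / 2)) := fun L => by
    linear_combination spin_sq (L i) + spin_sq (L (finNext i))
  simp only [e, Finset.sum_sub_distrib, ← Finset.mul_sum, sum_spin_mul hi, mul_zero, sub_zero]
  exact half_pow_mul_card N _

theorem sum_excess_mul {N : ℕ} {u : ℝ} (h0 : 0 < u) (h1 : u < 1) {i j k : Fin N}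
    (hij : finNext i = j) (hjk : finNext j = k) (h12 : i ≠ j) (h13 : i ≠ k) (h23 : j ≠ k) :
    ∑ a : Fin N → Outc, (a i).excess * (a j).excess * ringP N u a = -(1 / 4) := by
  have h := sum_ringP_excess N h0 h1 fun c => c i * c j
  refine h.trans ?_
  simp only [hij, hjk]
  have e : ∀ L : Fin N → Fin 2, ((L i : ℝ) - (L j : ℝ)) * ((L j : ℝ) - (L k : ℝ)) =
      ((L i : ℝ) - 1 / 2) * ((L j : ℝ) - 1 / 2) - ((L i : ℝ) - 1 / 2) * ((L k : ℝ) - 1 / 2)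
      + ((L j : ℝ) - 1 / 2) * ((L k : ℝ) - 1 / 2) + -(1 / 4) := fun L => by
    linear_combination -spin_sq (L j)
  simp only [e, Finset.sum_add_distrib, Finset.sum_sub_distrib, sum_spin_mul h12, sum_spin_mul h13,
    sum_spin_mul h23, sub_zero, zero_add]
  exact half_pow_mul_card N _

/-- Splitting off the first three parties. -/
theorem sum_cons_three {α M : Type*} [Fintype α] [AddCommMonoid M] {n : ℕ}
    (f : (Fin (n + 3) → α) → M) :
    ∑ a, f a = ∑ a₀, ∑ a₁, ∑ a₂, ∑ m : Fin n → α,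
      f (Fin.cons a₀ (Fin.cons a₁ (Fin.cons a₂ m) : Fin (n + 2) → α)) := by
  have step : ∀ {k : ℕ} (f : (Fin (k + 1) → α) → M),
      ∑ a, f a = ∑ a₀, ∑ a' : Fin k → α, f (Fin.cons a₀ a') := fun {k} f => by
    rw [← Fintype.sum_prod_type']
    exact (Fintype.sum_equiv (Fin.consEquiv fun _ => α) _ _ fun _ => rfl).symm
  rw [step]
  simp only [step]

theorem finNext_castSucc {n : ℕ} (j : Fin n) : finNext j.castSucc = j.succ := by
  ext
  simp [finNext, Nat.mod_eq_of_lt]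

theorem finNext_last (n : ℕ) : finNext (Fin.last n) = 0 := by
  ext
  simp [finNext]

/-- Amplitudes for outcomes in which every party of the merged block sees exactly one token. -/
theorem ringAmp_cons_one (n : ℕ) (u : ℝ) (a₀ a₁ a₂ : Outc) (i : Fin (n + 1) → Fin 2) :
    ringAmp (n + 4) u (Fin.cons a₀ (Fin.cons a₁ (Fin.cons a₂ fun j => .one (i j))
        : Fin (n + 3) → Outc)) =
      (Real.sqrt 2)⁻¹ ^ (n + 4) * ∑ l₀ : Fin 2, ∑ l₁ : Fin 2, ∑ l₂ : Fin 2,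
        basisVec u a₀ l₀ l₁.rev * (basisVec u a₁ l₁ l₂.rev * (basisVec u a₂ l₂ l₀.rev *
          ∏ j, basisVec u (.one (i j)) l₀ l₀.rev)) := by
  rw [ringAmp_eq, sum_cons_three (n := n + 1)]
  refine congrArg _ (Finset.sum_congr rfl fun l₀ _ => Finset.sum_congr rfl fun l₁ _ =>
    Finset.sum_congr rfl fun l₂ _ => ?_)
  have hn : ∀ L : Fin (n + 1) → Fin 2, ∀ c : Fin (n + 4) → Fin 2,
      c = Fin.cons l₀ (Fin.cons l₁ (Fin.cons l₂ L) : Fin (n + 3) → Fin 2) →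
      c (finNext 0) = l₁ ∧ c (finNext 1) = l₂ ∧ c (finNext 2) = L 0 ∧
      (∀ j : Fin n, c (finNext j.castSucc.succ.succ.succ) = L j.succ) ∧
      c (finNext (Fin.last n).succ.succ.succ) = l₀ := by
    rintro L c rfl
    refine ⟨?_, ?_, ?_, fun j => ?_, ?_⟩
    · exact congrArg _ (finNext_castSucc (n := n + 3) 0)
    · exact congrArg _ (finNext_castSucc (n := n + 3) 1)
    · exact congrArg _ (finNext_castSucc (n := n + 3) 2)
    · exact congrArg _ (finNext_castSucc (n := n + 3) j.succ.succ.succ)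
    · exact congrArg _ (finNext_last (n + 3))
  rw [Finset.sum_eq_single fun _ => l₀]
  · obtain ⟨e0, e1, e2, e3, e4⟩ := hn (fun _ => l₀) _ rfl
    rw [Fin.prod_univ_succ, Fin.prod_univ_succ, Fin.prod_univ_succ]
    refine congrArg₂ _ (congrArg _ (congrArg _ e0)) (congrArg₂ _ (congrArg _ (congrArg _ e1))
      (congrArg₂ _ (congrArg _ (congrArg _ e2)) (Finset.prod_congr rfl fun j _ => ?_)))
    refine congrArg _ (congrArg _ ?_)
    refine Fin.lastCases ?_ (fun j => ?_) j
    · exact e4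
    · exact e3 j
  · intro L _ hL
    obtain ⟨e0, e1, e2, e3, e4⟩ := hn L _ rfl
    by_contra h
    have h := Finset.prod_ne_zero_iff.1 h
    refine hL (funext fun j => ?_)
    induction j using Fin.reverseInduction with
    | last =>
      have := h (Fin.last n).succ.succ.succ (Finset.mem_univ _)
      rw [e4] at this
      exact basisVec_one_eq this
    | cast j ih =>
      have := h j.castSucc.succ.succ.succ (Finset.mem_univ _)
      rw [e3] at this
      exact (basisVec_one_eq this).trans ih
  · simp

end Quantum

section Model

theorem sum_mul_eq_of_support {α : Type*} [Fintype α] {q e : α → ℝ} {E : ℝ} (s : ∑ a, q a = 1)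
    (h : ∀ a, q a ≠ 0 → e a = E) (f : ℝ → ℝ) : ∑ a, q a * f (e a) = f E := by
  rw [← one_mul (f E), ← s, Finset.sum_mul]
  refine Finset.sum_congr rfl fun a _ => ?_
  by_cases ha : q a = 0
  · simp [ha]
  · rw [h a ha]

theorem Outc.excess_zero : Outc.zero.excess = -1 := rfl

theorem Outc.excess_one (k : Fin 2) : (Outc.one k).excess = 0 := rfl

theorem Outc.excess_two : Outc.two.excess = 1 := rfl

theorem Outc.excess_cube (a : Outc) : a.excess ^ 3 = a.excess := by
  cases a <;> norm_num [Outc.excess]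

/-- If jointly possible outcomes have vanishing total excess, every party has a deterministic
token count. -/
theorem CountPoint.of_mul_ne_zero {n : ℕ} {q₁ q₂ q₃ : Outc → ℝ} {q : (Fin n → Outc) → ℝ}
    (s₁ : ∑ a, q₁ a = 1) (s₂ : ∑ a, q₂ a = 1) (s₃ : ∑ a, q₃ a = 1) (s : ∑ m, q m = 1)
    (h : ∀ a₀ a₁ a₂ m, q₁ a₀ * q₂ a₁ * q₃ a₂ * q m ≠ 0 →
      a₀.excess + a₁.excess + a₂.excess + ∑ j, (m j).excess = 0)
    {m₀ : Fin n → Outc} (hm₀ : ∑ j, (m₀ j).excess = 0) :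
    CountPoint (q m₀) (∑ m, q m * ∑ j, (m j).excess) q₁ q₂ q₃ := by
  obtain ⟨b₀, -, h₀⟩ := Finset.exists_ne_zero_of_sum_ne_zero (s₁.trans_ne one_ne_zero)
  obtain ⟨b₁, -, h₁⟩ := Finset.exists_ne_zero_of_sum_ne_zero (s₂.trans_ne one_ne_zero)
  obtain ⟨b₂, -, h₂⟩ := Finset.exists_ne_zero_of_sum_ne_zero (s₃.trans_ne one_ne_zero)
  obtain ⟨b, -, h₃⟩ := Finset.exists_ne_zero_of_sum_ne_zero (s.trans_ne one_ne_zero)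
  have hb := h b₀ b₁ b₂ b (by positivity)
  have e₀ : ∀ a, q₁ a ≠ 0 → a.excess = b₀.excess := fun a ha => by
    linarith [h a b₁ b₂ b (by positivity)]
  have e₁ : ∀ a, q₂ a ≠ 0 → a.excess = b₁.excess := fun a ha => by
    linarith [h b₀ a b₂ b (by positivity)]
  have e₂ : ∀ a, q₃ a ≠ 0 → a.excess = b₂.excess := fun a ha => by
    linarith [h b₀ b₁ a b (by positivity)]
  have e : ∀ m, q m ≠ 0 → ∑ j, (m j).excess = ∑ j, (b j).excess := fun m hm => by
    linarith [h b₀ b₁ b₂ m (by positivity)]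
  have key : ∀ {r : Outc → ℝ} {c : Outc}, ∑ a, r a = 1 → (∀ a, r a ≠ 0 → a.excess = c.excess) →
      r .two - r .zero = c.excess ∧ r .two + r .zero = c.excess ^ 2 := fun {r c} hs hr => by
    have k₁ := sum_mul_eq_of_support hs hr fun x => x
    have k₂ := sum_mul_eq_of_support hs hr fun x => x ^ 2
    rw [Outc.sum_eq] at k₁ k₂
    simp only [Outc.excess_zero, Outc.excess_one, Outc.excess_two] at k₁ k₂
    exact ⟨by linarith, by linarith⟩
  obtain ⟨k₀, k₀'⟩ := key s₁ e₀
  obtain ⟨k₁, k₁'⟩ := key s₂ e₁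
  obtain ⟨k₂, k₂'⟩ := key s₃ e₂
  have k := sum_mul_eq_of_support s e fun x => x
  refine ⟨?_, by rw [k₀, k₀'], by rw [k₁, k₁'], by rw [k₂, k₂'], ?_, ?_, ?_⟩
  · rw [k₀, k₁, k₂, k]
    linarith
  · rw [k₀, Outc.excess_cube]
  · rw [k₁, Outc.excess_cube]
  · rw [k, mul_eq_zero]
    exact or_iff_not_imp_left.2 fun hm => (e m₀ hm).symm.trans hm₀

theorem BddMeas.of_sum_eq_one {α ι : Type*} [MeasurableSpace α] [Fintype ι] {p : ι → α → ℝ}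
    (hm : ∀ i, Measurable (p i)) (hn : ∀ i x, 0 ≤ p i x) (hs : ∀ x, ∑ i, p i x = 1) (i : ι) :
    BddMeas (p i) := by
  refine ⟨hm i, 1, fun x => ?_⟩
  rw [abs_of_nonneg (hn i x), ← hs x]
  exact Finset.single_le_sum (fun j _ => hn j x) (Finset.mem_univ i)

variable {X Y Z : Type*} [MeasurableSpace X] [MeasurableSpace Y] [MeasurableSpace Z]

theorem BddMeas.mul_responses {f₁ : X → Z → ℝ} {f₂ : X → Y → ℝ} {f₃ : Y → Z → ℝ} {f : Z → ℝ}
    (h₁ : BddMeas (Function.uncurry f₁)) (h₂ : BddMeas (Function.uncurry f₂))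
    (h₃ : BddMeas (Function.uncurry f₃)) (h : BddMeas f) : BddMeas fun ω : X × Y × Z =>
      f₁ ω.1 ω.2.2 * f₂ ω.1 ω.2.1 * f₃ ω.2.1 ω.2.2 * f ω.2.2 :=
  (((h₁.comp (h := fun ω : X × Y × Z => (ω.1, ω.2.2)) (by fun_prop)).mul
    (h₂.comp (h := fun ω : X × Y × Z => (ω.1, ω.2.1)) (by fun_prop))).mul
    (h₃.comp (h := fun ω : X × Y × Z => (ω.2.1, ω.2.2)) (by fun_prop))).mul
    (h.comp (by fun_prop))

theorem BddMeas.integral_prod_prod {f : X × Y × Z → ℝ} (hf : BddMeas f) (μ : Measure X)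
    (ν : Measure Y) (ρ : Measure Z) [IsProbabilityMeasure μ] [IsProbabilityMeasure ν]
    [IsProbabilityMeasure ρ] :
    ∫ ω, f ω ∂μ.prod (ν.prod ρ) = ∫ x, ∫ y, ∫ z, f (x, y, z) ∂ρ ∂ν ∂μ := by
  rw [integral_prod _ (hf.integrable _)]
  exact integral_congr_ae (ae_of_all _ fun x => integral_prod _
    ((hf.comp (h := fun q : Y × Z => (x, q)) (by fun_prop)).integrable _))

variable (μ : Measure X) (ν : Measure Y) (ρ : Measure Z)

/-- A local model of the ring distribution with `n + 1` merged parties. -/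
structure RingModel (n : ℕ) (u : ℝ) (p₁ : Outc → X → Z → ℝ) (p₂ : Outc → X → Y → ℝ)
    (p₃ : Outc → Y → Z → ℝ) (p : (Fin (n + 1) → Outc) → Z → ℝ) : Prop where
  b₁ : ∀ a, BddMeas (Function.uncurry (p₁ a))
  b₂ : ∀ a, BddMeas (Function.uncurry (p₂ a))
  b₃ : ∀ a, BddMeas (Function.uncurry (p₃ a))
  bM : ∀ m, BddMeas (p m)
  n₁ : ∀ a x z, 0 ≤ p₁ a x z
  n₂ : ∀ a x y, 0 ≤ p₂ a x y
  n₃ : ∀ a y z, 0 ≤ p₃ a y z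
  nM : ∀ m z, 0 ≤ p m z
  s₁ : ∀ x z, ∑ a, p₁ a x z = 1
  s₂ : ∀ x y, ∑ a, p₂ a x y = 1
  s₃ : ∀ y z, ∑ a, p₃ a y z = 1
  sM : ∀ z, ∑ m, p m z = 1
  eq : ∀ a₀ a₁ a₂ (m : Fin (n + 1) → Outc), ∫ ω, p₁ a₀ ω.1 ω.2.2 * p₂ a₁ ω.1 ω.2.1 * p₃ a₂ ω.2.1 ω.2.2 * p m ω.2.2
    ∂μ.prod (ν.prod ρ) =
      ringP (n + 4) u (Fin.cons a₀ (Fin.cons a₁ (Fin.cons a₂ m) : Fin (n + 3) → Outc))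

variable {n : ℕ} {u : ℝ} {p₁ : Outc → X → Z → ℝ} {p₂ : Outc → X → Y → ℝ}
  {p₃ : Outc → Y → Z → ℝ} {p : (Fin (n + 1) → Outc) → Z → ℝ}
  {μ ν ρ}

theorem RingModel.bddMeas (h : RingModel μ ν ρ n u p₁ p₂ p₃ p) (a₀ a₁ a₂ : Outc)
    (m : Fin (n + 1) → Outc) : BddMeas fun ω : X × Y × Z =>
      p₁ a₀ ω.1 ω.2.2 * p₂ a₁ ω.1 ω.2.1 * p₃ a₂ ω.2.1 ω.2.2 * p m ω.2.2 :=
  (h.b₁ a₀).mul_responses (h.b₂ a₁) (h.b₃ a₂) (h.bM m)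

variable [IsProbabilityMeasure μ] [IsProbabilityMeasure ν] [IsProbabilityMeasure ρ]

/-- Joint expectations for the first two parties. -/
theorem RingModel.integral_sum (h : RingModel μ ν ρ n u p₁ p₂ p₃ p) (g : Outc → Outc → ℝ) :
    ∫ ω, ∑ a₀, ∑ a₁, g a₀ a₁ * (p₁ a₀ ω.1 ω.2.2 * p₂ a₁ ω.1 ω.2.1) ∂μ.prod (ν.prod ρ) =
      ∑ a : Fin (n + 4) → Outc, g (a 0) (a 1) * ringP (n + 4) u a := by
  have e : ∀ ω : X × Y × Z, ∑ a₀, ∑ a₁, g a₀ a₁ * (p₁ a₀ ω.1 ω.2.2 * p₂ a₁ ω.1 ω.2.1) =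
      ∑ a₀, ∑ a₁, ∑ a₂, ∑ m, g a₀ a₁ *
        (p₁ a₀ ω.1 ω.2.2 * p₂ a₁ ω.1 ω.2.1 * p₃ a₂ ω.2.1 ω.2.2 * p m ω.2.2) := fun ω => by
    simp only [← Finset.mul_sum, h.sM, mul_one, h.s₃]
  have i : ∀ a₀ a₁ a₂ m, Integrable (fun ω : X × Y × Z => g a₀ a₁ *
      (p₁ a₀ ω.1 ω.2.2 * p₂ a₁ ω.1 ω.2.1 * p₃ a₂ ω.2.1 ω.2.2 * p m ω.2.2))
      (μ.prod (ν.prod ρ)) := fun a₀ a₁ a₂ m => ((h.bddMeas a₀ a₁ a₂ m).integrable _).const_mul _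
  simp only [e]
  rw [sum_cons_three (n := n + 1), integral_finsetSum _ fun a₀ _ => integrable_finsetSum _
    fun a₁ _ => integrable_finsetSum _ fun a₂ _ => integrable_finsetSum _ fun m _ => i a₀ a₁ a₂ m]
  refine Finset.sum_congr rfl fun a₀ _ => ?_
  rw [integral_finsetSum _ fun a₁ _ => integrable_finsetSum _ fun a₂ _ =>
    integrable_finsetSum _ fun m _ => i a₀ a₁ a₂ m]
  refine Finset.sum_congr rfl fun a₁ _ => ?_
  rw [integral_finsetSum _ fun a₂ _ => integrable_finsetSum _ fun m _ => i a₀ a₁ a₂ m]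
  refine Finset.sum_congr rfl fun a₂ _ => ?_
  rw [integral_finsetSum _ fun m _ => i a₀ a₁ a₂ m]
  refine Finset.sum_congr rfl fun m _ => ?_
  rw [integral_const_mul, h.eq]
  rfl

theorem RingModel.tokenModel (h : RingModel μ ν ρ n u p₁ p₂ p₃ p) (h0 : 0 < u) (h1 : u < 1)
    {m₀ : Fin (n + 1) → Outc} (hm₀ : ∑ j, (m₀ j).excess = 0) :
    TokenModel μ ν ρ p₁ p₂ p₃ (p m₀) fun z => ∑ m, p m z * ∑ j, (m j).excess := by
  have hnext : finNext (0 : Fin (n + 4)) = 1 := finNext_castSucc (n := n + 3) 0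
  have hnext' : finNext (1 : Fin (n + 4)) = 2 := finNext_castSucc (n := n + 3) 1
  have h01 : (0 : Fin (n + 4)) ≠ 1 := by simp
  have h02 : (0 : Fin (n + 4)) ≠ 2 := by simp [Fin.ext_iff, Nat.mod_eq_of_lt]
  have h12 : (1 : Fin (n + 4)) ≠ 2 := by simp [Fin.ext_iff, Nat.mod_eq_of_lt]
  refine ⟨h.b₁, h.b₂, h.b₃, h.bM m₀, h.n₁, h.n₂, h.n₃, h.nM m₀, h.s₁, h.s₂, h.s₃, ?_,
    ?_, ?_, ?_, ?_, ?_⟩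
  · have hae : ∀ᵐ ω ∂μ.prod (ν.prod ρ), ∀ a₀ a₁ a₂ m,
        p₁ a₀ ω.1 ω.2.2 * p₂ a₁ ω.1 ω.2.1 * p₃ a₂ ω.2.1 ω.2.2 * p m ω.2.2 ≠ 0 →
        a₀.excess + a₁.excess + a₂.excess + ∑ j, (m j).excess = 0 := by
      simp only [ae_all_iff]
      intro a₀ a₁ a₂ m
      by_cases hz : a₀.excess + a₁.excess + a₂.excess + ∑ j, (m j).excess = 0
      · exact ae_of_all _ fun _ _ => hz
      have hP := h.eq a₀ a₁ a₂ m
      rw [not_not.1 (mt sum_excess_eq_zero fun hs => hz ?_), integral_eq_zero_iff_of_nonneg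
        (fun ω => mul_nonneg (mul_nonneg (mul_nonneg (h.n₁ _ _ _) (h.n₂ _ _ _)) (h.n₃ _ _ _))
          (h.nM _ _)) ((h.bddMeas a₀ a₁ a₂ m).integrable _)] at hP
      · exact hP.mono fun ω hω hne => absurd hω hne
      · rw [Fin.sum_univ_succ, Fin.sum_univ_succ, Fin.sum_univ_succ] at hs
        simpa only [Fin.cons_zero, Fin.cons_succ, add_assoc] using hs
    exact hae.mono fun ω hω => CountPoint.of_mul_ne_zero (h.s₁ _ _) (h.s₂ _ _) (h.s₃ _ _)
      (h.sM _) hω hm₀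
  · rw [← sum_excess_mean h0 h1 (0 : Fin (n + 4)), ← h.integral_sum fun a _ => a.excess]
    congr 1 with ω
    simp only [← Finset.mul_sum, h.s₂, mul_one]
    rw [Outc.sum_eq]
    simp only [Outc.excess]
    ring
  · rw [← sum_excess_mean h0 h1 (1 : Fin (n + 4)), ← h.integral_sum fun _ a => a.excess]
    congr 1 with ω
    simp only [mul_left_comm _ (p₁ _ _ _), ← Finset.mul_sum, ← Finset.sum_mul, h.s₁, one_mul]
    rw [Outc.sum_eq]
    simp only [Outc.excess]
    ring
  · rw [← sum_excess_sq h0 h1 (h01.trans_eq hnext.symm),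
      ← h.integral_sum fun a _ => a.excess ^ 2]
    congr 1 with ω
    simp only [← Finset.mul_sum, h.s₂, mul_one]
    rw [Outc.sum_eq]
    simp only [Outc.excess]
    ring
  · rw [← sum_excess_sq h0 h1 (h12.trans_eq hnext'.symm),
      ← h.integral_sum fun _ a => a.excess ^ 2]
    congr 1 with ω
    simp only [mul_left_comm _ (p₁ _ _ _), ← Finset.mul_sum, ← Finset.sum_mul, h.s₁, one_mul]
    rw [Outc.sum_eq]
    simp only [Outc.excess]
    ring
  · rw [← sum_excess_mul h0 h1 hnext hnext' h01 h02 h12,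
      ← h.integral_sum fun a b => a.excess * b.excess]
    congr 1 with ω
    simp only [Outc.sum_eq, Outc.excess]
    ring

theorem ringP_cons_one (n : ℕ) (u : ℝ) (a₀ a₁ a₂ : Outc) (i : Fin (n + 1) → Fin 2) :
    ringP (n + 4) u (Fin.cons a₀ (Fin.cons a₁ (Fin.cons a₂ fun j => .one (i j))
        : Fin (n + 3) → Outc)) =
      (1 / 2) ^ (n + 4) * ((∏ j, uco u (i j)) * (∑ l₁ : Fin 2, ∑ l₂ : Fin 2,
          basisVec u a₀ 0 l₁.rev * (basisVec u a₁ l₁ l₂.rev * basisVec u a₂ l₂ 1))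
        + (∏ j, vco u (i j)) * ∑ l₁ : Fin 2, ∑ l₂ : Fin 2,
          basisVec u a₀ 1 l₁.rev * (basisVec u a₁ l₁ l₂.rev * basisVec u a₂ l₂ 0)) ^ 2 := by
  have hc : ((Real.sqrt 2)⁻¹ ^ (n + 4)) ^ 2 = (1 / 2 : ℝ) ^ (n + 4) := by
    rw [← pow_mul, mul_comm, pow_mul, inv_pow, Real.sq_sqrt zero_le_two, one_div]
  have hU : ∏ j, basisVec u (.one (i j)) 0 (0 : Fin 2).rev = ∏ j, uco u (i j) := by
    simp [basisVec]
  have hV : ∏ j, basisVec u (.one (i j)) 1 (1 : Fin 2).rev = ∏ j, vco u (i j) := by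
    simp [basisVec]
  rw [ringP, ringAmp_cons_one, mul_pow, hc, Fin.sum_univ_two, hU, hV]
  congr 2
  simp only [Fin.sum_univ_two, show (0 : Fin 2).rev = 1 from rfl, show (1 : Fin 2).rev = 0 from rfl]
  ring

theorem sum_excess_one {n : ℕ} (i : Fin n → Fin 2) : ∑ j, (Outc.one (i j)).excess = 0 :=
  Finset.sum_eq_zero fun _ _ => rfl

theorem uco_ne_zero {u : ℝ} (h0 : 0 < u) (h1 : u < 1) (i : Fin 2) : uco u i ≠ 0 := by
  have : 0 < √(1 - u ^ 2) := Real.sqrt_pos.2 (by nlinarith)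
  fin_cases i <;> simp [uco, h0.ne', this.ne']

theorem vco_ne_zero {u : ℝ} (h0 : 0 < u) (h1 : u < 1) (i : Fin 2) : vco u i ≠ 0 := by
  have : 0 < √(1 - u ^ 2) := Real.sqrt_pos.2 (by nlinarith)
  fin_cases i <;> simp [vco, h0.ne', this.ne']

theorem RingModel.prod_vco_bound (h : RingModel μ ν ρ n u p₁ p₂ p₃ p) (h0 : 0 < u) (h1 : u < 1)
    (i : Fin (n + 1) → Fin 2) :
    (∏ j, vco u (i j)) ^ 2 * (1 - 3 * vco u 0 ^ 2) ≤
      ((∏ j, uco u (i j)) * uco u 1 ^ 3 + (∏ j, vco u (i j)) * vco u 1 ^ 3) ^ 2 := by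
  have hU : ∏ j, uco u (i j) ≠ 0 := Finset.prod_ne_zero_iff.2 fun j _ => uco_ne_zero h0 h1 _
  have hr : vco u 0 ^ 2 + vco u 1 ^ 2 = 1 := by
    have := Real.sq_sqrt (show 0 ≤ 1 - u ^ 2 by nlinarith)
    simp [vco, this]
  have key := (h.tokenModel h0 h1 (sum_excess_one i)).lower_bound
    (A := (1 / 2) ^ (n + 4) * (∏ j, uco u (i j)) ^ 2)
    (B := (1 / 2) ^ (n + 4) * (∏ j, vco u (i j)) ^ 2) (r := fun k => vco u k ^ 2)
    (by positivity) hr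
    (fun k => by
      rw [h.eq, ringP_cons_one]
      simp [basisVec]
      ring)
    (fun k => by
      rw [h.eq, ringP_cons_one]
      simp [basisVec]
      ring)
    (fun k => by
      rw [h.eq, ringP_cons_one]
      simp [basisVec]
      ring)
  rw [h.eq, ringP_cons_one, mul_assoc] at key
  refine (le_of_mul_le_mul_left key (by positivity)).trans_eq ?_
  simp [basisVec]
  ring

theorem RingModel.prod_uco_bound (h : RingModel μ ν ρ n u p₁ p₂ p₃ p) (h0 : 0 < u) (h1 : u < 1)
    (i : Fin (n + 1) → Fin 2) :
    (∏ j, uco u (i j)) ^ 2 * (1 - 3 * uco u 1 ^ 2) ≤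
      ((∏ j, uco u (i j)) * uco u 0 ^ 3 + (∏ j, vco u (i j)) * vco u 0 ^ 3) ^ 2 := by
  have hV : ∏ j, vco u (i j) ≠ 0 := Finset.prod_ne_zero_iff.2 fun j _ => vco_ne_zero h0 h1 _
  have hr : uco u 1 ^ 2 + uco u 0 ^ 2 = 1 := by
    have := Real.sq_sqrt (show 0 ≤ 1 - u ^ 2 by nlinarith)
    simp [uco, this]
  have key := (h.tokenModel h0 h1 (sum_excess_one i)).reflect.lower_bound
    (A := (1 / 2) ^ (n + 4) * (∏ j, vco u (i j)) ^ 2)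
    (B := (1 / 2) ^ (n + 4) * (∏ j, uco u (i j)) ^ 2) (r := fun k => uco u k.rev ^ 2)
    (by positivity) hr
    (fun k => by
      rw [h.eq, ringP_cons_one]
      simp [basisVec, Outc.reflect]
      ring)
    (fun k => by
      rw [h.eq, ringP_cons_one]
      simp [basisVec, Outc.reflect]
      ring)
    (fun k => by
      rw [h.eq, ringP_cons_one]
      simp [basisVec, Outc.reflect]
      ring)
  rw [h.eq, ringP_cons_one, mul_assoc] at key
  refine (le_of_mul_le_mul_left key (by positivity)).trans_eq ?_
  simp [basisVec, Outc.reflect]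
  ring

theorem exists_prod_uco_vco (u : ℝ) {n s t : ℕ} (h : s + t = n) : ∃ i : Fin n → Fin 2,
    ∏ j, uco u (i j) = uco u 1 ^ s * uco u 0 ^ t ∧ ∏ j, vco u (i j) = vco u 1 ^ s * vco u 0 ^ t := by
  subst h
  refine ⟨Fin.addCases (fun _ => 1) fun _ => 0, ?_, ?_⟩ <;> simp [Fin.prod_univ_add]

theorem RingModel.pow_bound (h : RingModel μ ν ρ n u p₁ p₂ p₃ p) (h0 : 0 < u) (h1 : u < 1)
    {k q : ℕ} (hn : 4 * k + q = n + 1) :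
    (√(1 - u ^ 2) ^ q) ^ 2 * (1 - 3 * √(1 - u ^ 2) ^ 2) ≤
      (u ^ q * √(1 - u ^ 2) ^ 3 - √(1 - u ^ 2) ^ q * u ^ 3) ^ 2 := by
  obtain ⟨i, hU, hV⟩ := exists_prod_uco_vco u (n := n + 1) (s := 2 * k) (t := 2 * k + q) (by omega)
  have hb := h.prod_vco_bound h0 h1 i
  have hv : 0 < √(1 - u ^ 2) := Real.sqrt_pos.2 (by nlinarith)
  rw [hU, hV] at hb
  simp only [uco, vco, Matrix.cons_val_zero, Matrix.cons_val_one] at hb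
  generalize √(1 - u ^ 2) = v at hb hv ⊢
  have he : (-u) ^ (2 * k) = u ^ (2 * k) := (even_two_mul k).neg_pow u
  refine le_of_mul_le_mul_left ?_ (show 0 < ((u * v) ^ (2 * k)) ^ 2 by positivity)
  calc _ = ((-u) ^ (2 * k) * v ^ (2 * k + q)) ^ 2 * (1 - 3 * v ^ 2) := by
        rw [he]
        ring
    _ ≤ _ := hb
    _ = _ := by
        rw [he]
        ring

theorem RingModel.pow_bound_reflect (h : RingModel μ ν ρ n u p₁ p₂ p₃ p) (h0 : 0 < u)
    (h1 : u < 1) {k : ℕ} (hn : 4 * k + 4 = n + 1) :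
    1 - 3 * √(1 - u ^ 2) ^ 2 ≤ u ^ 4 * (u - √(1 - u ^ 2)) ^ 2 := by
  obtain ⟨i, hU, hV⟩ := exists_prod_uco_vco u (n := n + 1) (s := 2 * k + 3) (t := 2 * k + 1)
    (by omega)
  have hb := h.prod_uco_bound h0 h1 i
  have hv : 0 < √(1 - u ^ 2) := Real.sqrt_pos.2 (by nlinarith)
  rw [hU, hV] at hb
  simp only [uco, vco, Matrix.cons_val_zero, Matrix.cons_val_one] at hb
  generalize √(1 - u ^ 2) = v at hb hv ⊢
  have he : (-u) ^ (2 * k + 3) = -u ^ (2 * k + 3) :=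
    Odd.neg_pow ⟨k + 1, by ring⟩ u
  refine le_of_mul_le_mul_left ?_ (show 0 < ((u * v) ^ (2 * k) * (v ^ 3 * u)) ^ 2 by positivity)
  calc _ = (v ^ (2 * k + 3) * u ^ (2 * k + 1)) ^ 2 * (1 - 3 * v ^ 2) := by ring
    _ ≤ _ := hb
    _ = _ := by
        rw [he]
        ring

theorem quartic_bound {u v : ℝ} (hu : 0.841 < u) (hv : 0 < v) (huv : v ^ 2 = 1 - u ^ 2) :
    u ^ 4 * (u - v) ^ 2 < 1 - 3 * v ^ 2 := by
  have hv' : v < 0.5411 := by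
    refine lt_of_pow_lt_pow_left₀ 2 (by norm_num) ?_
    nlinarith
  have hu5 : (0.841 : ℝ) ^ 5 < u ^ 5 := pow_lt_pow_left₀ hu (by norm_num) (by norm_num)
  have hx : v * (1 + v ^ 2) < 2 * u ^ 5 := by
    have : v ^ 2 < 0.5411 ^ 2 := pow_lt_pow_left₀ hv' hv.le (by norm_num)
    norm_num at this hu5
    nlinarith
  have hu2 : u ^ 2 = 1 - v ^ 2 := by linarith
  have e : 1 - 3 * v ^ 2 - u ^ 4 * (u - v) ^ 2 = v * (2 * u ^ 5 - v * (1 + v ^ 2)) := by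
    linear_combination (-u ^ 4 + v ^ 2 - 1 - u ^ 2 ) * huv
  nlinarith [mul_pos hv (sub_pos.2 hx)]

theorem RingModel.false (h : RingModel μ ν ρ n u p₁ p₂ p₃ p) (hu : 0.841 < u) (h1 : u < 1) :
    False := by
  have h0 : 0 < u := by linarith
  have hv : 0 < √(1 - u ^ 2) := Real.sqrt_pos.2 (by nlinarith)
  have huv : √(1 - u ^ 2) ^ 2 = 1 - u ^ 2 := Real.sq_sqrt (by nlinarith)
  have hx : √(1 - u ^ 2) ^ 2 < 0.293 := by
    rw [huv]
    nlinarith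
  have hq := quartic_bound hu hv huv
  obtain ⟨k, hk | hk | hk | hk⟩ : ∃ k, 4 * k + 1 = n + 1 ∨ 4 * k + 2 = n + 1 ∨
      4 * k + 3 = n + 1 ∨ 4 * k + 4 = n + 1 := ⟨n / 4, by omega⟩
  · have hb := h.pow_bound h0 h1 hk
    generalize √(1 - u ^ 2) = v at *
    have hu2 : u ^ 2 = 1 - v ^ 2 := by linarith
    refine absurd (le_of_mul_le_mul_left (a := v ^ 2) (c := (1 - v ^ 2) * (1 - 2 * v ^ 2) ^ 2)
      (b := 1 - 3 * v ^ 2) ?_ (by positivity)) (not_le.2 ?_)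
    · rw [← hu2]
      calc _ = (v ^ 1) ^ 2 * (1 - 3 * v ^ 2) := by ring
        _ ≤ _ := hb
        _ = v ^ 2 * (u ^ 2 * (u ^ 2 - v ^ 2) ^ 2) := by ring
        _ = _ := by
          rw [show u ^ 2 - v ^ 2 = 1 - 2 * v ^ 2 by linarith]
    · have : 0 < v ^ 2 * (1 - 4 * v ^ 2 + 2 * (v ^ 2) ^ 2) := mul_pos (by positivity) (by nlinarith)
      nlinarith
  · have hb := h.pow_bound h0 h1 hk
    generalize √(1 - u ^ 2) = v at *
    refine absurd (le_of_mul_le_mul_left (a := v ^ 4) (c := u ^ 4 * (u - v) ^ 2)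
      (b := 1 - 3 * v ^ 2) ?_ (by positivity)) (not_le.2 hq)
    calc _ = (v ^ 2) ^ 2 * (1 - 3 * v ^ 2) := by ring
      _ ≤ _ := hb
      _ = _ := by ring
  · have hb := h.pow_bound h0 h1 hk
    generalize √(1 - u ^ 2) = v at *
    have : 0 < (v ^ 3) ^ 2 * (1 - 3 * v ^ 2) := mul_pos (by positivity) (by linarith)
    nlinarith
  · exact absurd (h.pow_bound_reflect h0 h1 hk) (not_le.2 hq)

end Model
/-- for every `N ≥ 4` and `0.841 < u < 1`, the `N`-party ring
distribution is nonlocal on the network where parties `A₄,…,A_N` are merged into a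
single party `M` sharing a common source `λ₃` with `A₁` and `A₃` (`λ₁` connects
`A₁,A₂` and `λ₂` connects `A₂,A₃`).  Parties are `0`-indexed: `A_j = a (j-1)`. -/
theorem stmt_15 (N : ℕ) (hN : 4 ≤ N) (u : ℝ) (hu : (0.841 : ℝ) < u) (hu1 : u < 1) :
    ¬ ∃ (Λ₁ Λ₂ Λ₃ : Type)
        (m₁ : MeasurableSpace Λ₁) (m₂ : MeasurableSpace Λ₂) (m₃ : MeasurableSpace Λ₃)
        (μ₁ : @Measure Λ₁ m₁) (μ₂ : @Measure Λ₂ m₂) (μ₃ : @Measure Λ₃ m₃)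
        (p₁ : Outc → Λ₁ → Λ₃ → ℝ) (p₂ : Outc → Λ₁ → Λ₂ → ℝ)
        (p₃ : Outc → Λ₂ → Λ₃ → ℝ) (pM : (Fin (N - 3) → Outc) → Λ₃ → ℝ),
      IsProbabilityMeasure μ₁ ∧ IsProbabilityMeasure μ₂ ∧ IsProbabilityMeasure μ₃ ∧
      (∀ a, @Measurable _ _ (m₁.prod m₃) _ fun q : Λ₁ × Λ₃ => p₁ a q.1 q.2) ∧
      (∀ a, @Measurable _ _ (m₁.prod m₂) _ fun q : Λ₁ × Λ₂ => p₂ a q.1 q.2) ∧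
      (∀ a, @Measurable _ _ (m₂.prod m₃) _ fun q : Λ₂ × Λ₃ => p₃ a q.1 q.2) ∧
      (∀ f, @Measurable _ _ m₃ _ (pM f)) ∧
      (∀ x y, (∀ a, 0 ≤ p₁ a x y) ∧ ∑ a, p₁ a x y = 1) ∧
      (∀ x y, (∀ a, 0 ≤ p₂ a x y) ∧ ∑ a, p₂ a x y = 1) ∧
      (∀ x y, (∀ a, 0 ≤ p₃ a x y) ∧ ∑ a, p₃ a x y = 1) ∧
      (∀ x, (∀ f, 0 ≤ pM f x) ∧ ∑ f : Fin (N - 3) → Outc, pM f x = 1) ∧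
      (∀ a : Fin N → Outc,
        ringP N u a =
          ∫ x₁, ∫ x₂, ∫ x₃,
            p₁ (a ⟨0, by omega⟩) x₁ x₃ * p₂ (a ⟨1, by omega⟩) x₁ x₂
              * p₃ (a ⟨2, by omega⟩) x₂ x₃
              * pM (fun k => a ⟨(k : ℕ) + 3, by have := k.isLt; omega⟩) x₃
            ∂μ₃ ∂μ₂ ∂μ₁) := by
  rintro ⟨Λ₁, Λ₂, Λ₃, m₁, m₂, m₃, μ₁, μ₂, μ₃, p₁, p₂, p₃, pM, _, _, _, hm₁, hm₂, hm₃, hmM,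
    h₁, h₂, h₃, hM, hP⟩
  obtain ⟨n, rfl⟩ := Nat.exists_eq_add_of_le' hN
  have b₁ := BddMeas.of_sum_eq_one (p := fun a => Function.uncurry (p₁ a)) hm₁
    (fun a q => (h₁ q.1 q.2).1 a) fun q => (h₁ q.1 q.2).2
  have b₂ := BddMeas.of_sum_eq_one (p := fun a => Function.uncurry (p₂ a)) hm₂
    (fun a q => (h₂ q.1 q.2).1 a) fun q => (h₂ q.1 q.2).2
  have b₃ := BddMeas.of_sum_eq_one (p := fun a => Function.uncurry (p₃ a)) hm₃
    (fun a q => (h₃ q.1 q.2).1 a) fun q => (h₃ q.1 q.2).2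
  have bM := BddMeas.of_sum_eq_one hmM (fun m z => (hM z).1 m) fun z => (hM z).2
  have model : RingModel μ₁ μ₂ μ₃ n u p₁ p₂ p₃ pM := {
    b₁, b₂, b₃, bM
    n₁ := fun a x z => (h₁ x z).1 a
    n₂ := fun a x y => (h₂ x y).1 a
    n₃ := fun a y z => (h₃ y z).1 a
    nM := fun m z => (hM z).1 m
    s₁ := fun x z => (h₁ x z).2
    s₂ := fun x y => (h₂ x y).2
    s₃ := fun y z => (h₃ y z).2
    sM := fun z => (hM z).2
    eq := fun a₀ a₁ a₂ m => by
      rw [hP, ((b₁ a₀).mul_responses (b₂ a₁) (b₃ a₂) (bM m)).integral_prod_prod]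
      rfl }
  exact model.false hu hu1
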